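/- arXiv:2105.05848 — 2 statements merged into one kernel-verified Lean document; each statement's English description precedes it below -/
import Mathlib

section
/- Let H be a real Hilbert space, α ∈ (0,1), λ ≥ 0, and T > 0. Let e : [0,T] → H be continuous with e(0) = 0, differentiable on (0,T), such that s ↦ (t−s)^{−α}‖e′(s)‖ is integrable on (0,t) for every t ∈ (0,T], and such that t ↦ ‖e(t)‖ is Lipschitz continuous on [ε, T] for every ε ∈ (0,T). Let r : (0,T] → ℝ be nonnegative and continuous, and suppose that for every t ∈ (0,T]: (1/Γ(1−α)) ⟨∫_0^t (t−s)^{−α} e′(s) ds, e(t)⟩ + λ ‖e(t)‖² ≤ r(t) ‖e(t)‖. Then for every t ∈ (0,T], provided the supremum is finite: ‖e(t)‖ ≤ sup_{0 < s ≤ t} [ r(s) / ( s^{−α}/Γ(1−α) + λ ) ]. -/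
open MeasureTheory Real
open scoped RealInnerProductSpace

/-!
Let `τ` be a point of `(0, t]` where `‖e‖` attains its maximum over `[0, t]`. Then
`φ s = ⟪e s, e τ⟫` satisfies `φ s ≤ φ τ` on `[0, τ]`. For a nondecreasing kernel `k`, the function
`k (φ - φ τ)` has derivative `k' (φ - φ τ) + k φ' ≤ k φ'`, and it tends to `0` at `τ` even if `k`
blows up there, because `k s |φ τ - φ s|` is at most the tail integral of `k |φ'|` over `(s, τ)`.
Hence `k 0 (φ τ - φ 0) ≤ ∫ k φ'`. With `k s = (τ - s) ^ (-α)` this bounds the tested Caputo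
derivative at `τ` from below by `τ ^ (-α) / Γ(1 - α) * ‖e τ‖²`. The residual
inequality at `τ` then gives `‖e τ‖ ≤ r τ / 𝓡₀ τ`.
-/

section

open Set Topology Filter

theorem exists_isMaxOn_Icc_mem_Ioc {X Y : Type*} [LinearOrder X] [TopologicalSpace X]
    [CompactIccSpace X] [LinearOrder Y] [TopologicalSpace Y] [ClosedIciTopology Y] {a b : X}
    {f : X → Y} (hab : a < b) (hf : ContinuousOn f (Icc a b)) (hfab : f a ≤ f b) :
    ∃ c ∈ Ioc a b, IsMaxOn f (Icc a b) c := by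
  obtain ⟨c, hc, hmax⟩ := isCompact_Icc.exists_isMaxOn (nonempty_Icc.2 hab.le) hf
  rcases hc.1.eq_or_lt with rfl | hac
  · exact ⟨b, right_mem_Ioc.2 hab, fun x hx => (hmax hx).trans hfab⟩
  · exact ⟨c, ⟨hac, hc.2⟩, hmax⟩

section Kernel

variable {E : Type*} [NormedAddCommGroup E] [NormedSpace ℝ E] {f f' : ℝ → E} {k : ℝ → ℝ} {a b : ℝ}

theorem integrableOn_smul_of_integrableOn_mul_norm [CompleteSpace E] {s : Set ℝ}
    {μ : Measure ℝ} (hs : MeasurableSet s) (hk : Measurable k) (hk_nonneg : ∀ x ∈ s, 0 ≤ k x)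
    (hf : ∀ x ∈ s, HasDerivAt f (f' x) x) (hint : IntegrableOn (fun x => k x * ‖f' x‖) s μ) :
    IntegrableOn (fun x => k x • f' x) s μ := by
  have hmeas : AEStronglyMeasurable (fun x => k x • f' x) (μ.restrict s) := by
    refine (hk.aestronglyMeasurable.smul (aestronglyMeasurable_deriv f _)).congr ?_
    filter_upwards [ae_restrict_mem hs] with x hx
    simp only [Pi.smul_apply', (hf x hx).deriv]
  refine hint.mono' hmeas ?_
  filter_upwards [ae_restrict_mem hs] with x hx
  rw [norm_smul, norm_of_nonneg (hk_nonneg x hx)]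

theorem norm_smul_sub_le_integral_norm_smul (hab : a ≤ b) (hk : MonotoneOn k (Ico a b))
    (hka : 0 ≤ k a) (hf : ContinuousOn f (Icc a b)) (hf' : ∀ s ∈ Ioo a b, HasDerivAt f (f' s) s)
    (hint : IntegrableOn (fun s => k s • f' s) (Ioo a b)) :
    ‖k a • (f b - f a)‖ ≤ ∫ s in a..b, ‖k s • f' s‖ := by
  have hderiv : ∀ s ∈ Ioo a b, HasDerivAt (k a • f) (k a • f' s) s :=
    fun s hs => (hf' s hs).const_smul (k a)
  rw [smul_sub]
  refine norm_sub_le_integral_of_norm_deriv_le_of_le (f := k a • f) hab (hf.const_smul (k a))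
    (fun s hs => (hderiv s hs).differentiableAt.differentiableWithinAt) (ae_of_all _ ?_)
    ((intervalIntegrable_iff_integrableOn_Ioo_of_le hab).2 hint.norm)
  intro s hs
  have hks : k a ≤ k s := hk (left_mem_Ico.2 (hs.1.trans hs.2)) (Ioo_subset_Ico_self hs) hs.1.le
  rw [(hderiv s hs).deriv, norm_smul, norm_smul]
  gcongr
  exact abs_le_abs_of_nonneg hka hks

theorem continuousOn_smul_sub_right (hk : MonotoneOn k (Ico a b)) (hka : 0 ≤ k a)
    (hk_cont : ContinuousOn k (Ico a b)) (hf : ContinuousOn f (Icc a b))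
    (hf' : ∀ s ∈ Ioo a b, HasDerivAt f (f' s) s)
    (hint : IntegrableOn (fun s => k s • f' s) (Ioo a b)) :
    ContinuousOn (fun s => k s • (f s - f b)) (Icc a b) := by
  intro x hx
  rcases hx.2.lt_or_eq with hxb | rfl
  · have hcont : ContinuousOn (fun s => k s • (f s - f b)) (Ico a b) :=
      hk_cont.smul ((hf.mono Ico_subset_Icc_self).sub continuousOn_const)
    refine (hcont x ⟨hx.1, hxb⟩).mono_of_mem_nhdsWithin ?_
    filter_upwards [self_mem_nhdsWithin, mem_nhdsWithin_of_mem_nhds (Iio_mem_nhds hxb)]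
      with s hs hsb using ⟨hs.1, hsb⟩
  · have hbound : ∀ s ∈ Icc a x, ‖k s • (f s - f x)‖ ≤ ∫ u in s..x, ‖k u • f' u‖ := by
      intro s hs
      rcases hs.2.eq_or_lt with rfl | hsx
      · simp only [sub_self, smul_zero, norm_zero, intervalIntegral.integral_same, le_refl]
      have hks : 0 ≤ k s := hka.trans (hk (left_mem_Ico.2 (hs.1.trans_lt hsx)) ⟨hs.1, hsx⟩ hs.1)
      rw [← neg_sub, smul_neg, norm_neg]
      exact norm_smul_sub_le_integral_norm_smul hs.2 (hk.mono (Ico_subset_Ico_left hs.1)) hks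
        (hf.mono (Icc_subset_Icc_left hs.1)) (fun u hu => hf' u (Ioo_subset_Ioo_left hs.1 hu))
        (hint.mono_set (Ioo_subset_Ioo_left hs.1))
    have htail : ContinuousOn (fun s => ∫ u in s..x, ‖k u • f' u‖) (Icc a x) := by
      rw [← uIcc_of_le hx.1]
      refine intervalIntegral.continuousOn_primitive_interval_left ?_
      rwa [uIcc_of_le hx.1, integrableOn_Icc_iff_integrableOn_Ioo, IntegrableOn,
        integrable_norm_iff hint.aestronglyMeasurable]
    have hzero : Tendsto (fun s => ∫ u in s..x, ‖k u • f' u‖) (𝓝[Icc a x] x) (𝓝 0) := by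
      simpa only [intervalIntegral.integral_same] using (htail x hx).tendsto
    simpa only [ContinuousWithinAt, sub_self, smul_zero] using
      squeeze_zero_norm' (eventually_mem_nhdsWithin.mono hbound) hzero

theorem mul_sub_le_integral_mul_deriv_of_isMaxOn {φ φ' : ℝ → ℝ} (hab : a ≤ b)
    (hk : MonotoneOn k (Ico a b)) (hka : 0 ≤ k a) (hk_cont : ContinuousOn k (Ico a b))
    (hk_diff : DifferentiableOn ℝ k (Ioo a b)) (hφ : ContinuousOn φ (Icc a b))
    (hφ' : ∀ s ∈ Ioo a b, HasDerivAt φ (φ' s) s) (hmax : IsMaxOn φ (Icc a b) b)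
    (hint : IntegrableOn (fun s => k s * φ' s) (Ioo a b)) :
    k a * (φ b - φ a) ≤ ∫ s in Ioo a b, k s * φ' s := by
  have hk_deriv : ∀ s ∈ Ioo a b, HasDerivAt k (deriv k s) s := fun s hs =>
    (hk_diff.differentiableAt (isOpen_Ioo.mem_nhds hs)).hasDerivAt
  have hk_deriv_nonneg : ∀ s ∈ Ioo a b, 0 ≤ deriv k s := by
    intro s hs
    rw [← derivWithin_of_isOpen isOpen_Ioo hs]
    exact (hk.mono Ioo_subset_Ico_self).derivWithin_nonneg
  have hprod := intervalIntegral.sub_le_integral_of_hasDeriv_right_of_le hab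
    (continuousOn_smul_sub_right hk hka hk_cont hφ hφ' hint)
    (fun s hs => ((hk_deriv s hs).mul ((hφ' s hs).sub_const (φ b))).hasDerivWithinAt)
    ((integrableOn_Icc_iff_integrableOn_Ioo ..).2 hint)
    (fun s hs => add_le_of_nonpos_left <| mul_nonpos_of_nonneg_of_nonpos (hk_deriv_nonneg s hs)
      (sub_nonpos.2 (hmax (Ioo_subset_Icc_self hs))))
  rw [intervalIntegral.integral_of_le hab, integral_Ioc_eq_integral_Ioo] at hprod
  calc k a * (φ b - φ a) = k b • (φ b - φ b) - k a • (φ a - φ b) := by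
        simp only [smul_eq_mul]; ring
    _ ≤ ∫ s in Ioo a b, k s * φ' s := hprod

end Kernel

variable {H : Type*} [NormedAddCommGroup H] [InnerProductSpace ℝ H]

theorem isMaxOn_inner_right_of_isMaxOn_norm {X : Type*} {f : X → H} {s : Set X} {x : X}
    (h : IsMaxOn (fun y => ‖f y‖) s x) : IsMaxOn (fun y => ⟪f x, f y⟫) s x := fun y hy =>
  calc ⟪f x, f y⟫ ≤ ‖f x‖ * ‖f y‖ := real_inner_le_norm _ _
    _ ≤ ‖f x‖ * ‖f x‖ := mul_le_mul_of_nonneg_left (h hy) (norm_nonneg _)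
    _ = ⟪f x, f x⟫ := (real_inner_self_eq_norm_mul_norm _).symm

theorem mul_inner_sub_le_inner_integral_smul_of_isMaxOn [CompleteSpace H] {f f' : ℝ → H} {k : ℝ → ℝ}
    {a b : ℝ} {v : H} (hab : a ≤ b) (hk : MonotoneOn k (Ico a b)) (hka : 0 ≤ k a)
    (hk_cont : ContinuousOn k (Ico a b)) (hk_diff : DifferentiableOn ℝ k (Ioo a b))
    (hf : ContinuousOn f (Icc a b)) (hf' : ∀ s ∈ Ioo a b, HasDerivAt f (f' s) s)
    (hmax : IsMaxOn (fun s => ⟪v, f s⟫) (Icc a b) b)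
    (hint : IntegrableOn (fun s => k s • f' s) (Ioo a b)) :
    k a * ⟪v, f b - f a⟫ ≤ ⟪v, ∫ s in Ioo a b, k s • f' s⟫ := by
  have hderiv : ∀ s ∈ Ioo a b, HasDerivAt (fun u => ⟪v, f u⟫) ⟪v, f' s⟫ s := fun s hs => by
    simpa only [inner_zero_left, add_zero] using (hasDerivAt_const s v).inner ℝ (hf' s hs)
  have hint_inner : IntegrableOn (fun s => k s * ⟪v, f' s⟫) (Ioo a b) := by
    simpa only [IntegrableOn, real_inner_smul_right] using Integrable.const_inner (𝕜 := ℝ) v hint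
  rw [← integral_inner hint, inner_sub_right]
  simp only [real_inner_smul_right]
  exact mul_sub_le_integral_mul_deriv_of_isMaxOn hab hk hka hk_cont hk_diff
    (continuousOn_const.inner hf) hderiv hmax hint_inner

/-- The Caputo derivative of order `α`, based at `0`, of a function with classical derivative
`f'`. It takes the derivative as its argument, so that no choice is made where the function fails
to be differentiable. -/
noncomputable def caputoDeriv {E : Type*} [NormedAddCommGroup E] [NormedSpace ℝ E] (α : ℝ)
    (f' : ℝ → E) (t : ℝ) : E :=
  (1 / Gamma (1 - α)) • ∫ s in Ioo 0 t, (t - s) ^ (-α) • f' s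

/-- The residual barrier `𝓡₀` by which the residual is divided in the error bound. -/
noncomputable def residualBarrier (α lam t : ℝ) : ℝ :=
  t ^ (-α) / Gamma (1 - α) + lam

theorem residualBarrier_pos {α lam t : ℝ} (hα : α < 1) (hlam : 0 ≤ lam) (ht : 0 < t) :
    0 < residualBarrier α lam t :=
  add_pos_of_pos_of_nonneg (div_pos (rpow_pos_of_pos ht _) (Gamma_pos_of_pos (sub_pos.2 hα))) hlam

theorem monotoneOn_sub_rpow_neg {α : ℝ} (hα : 0 ≤ α) (t : ℝ) :
    MonotoneOn (fun s => (t - s) ^ (-α)) (Iio t) := fun _ _ _ hv huv =>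
  rpow_le_rpow_of_nonpos (sub_pos.2 hv) (sub_le_sub_left huv t) (neg_nonpos.2 hα)

theorem differentiableOn_sub_rpow (p t : ℝ) : DifferentiableOn ℝ (fun s => (t - s) ^ p) (Iio t) :=
  (differentiableOn_const t).sub differentiableOn_id |>.rpow_const
    fun _ hs => Or.inl (sub_pos.2 hs).ne'

theorem rpow_div_Gamma_mul_norm_sq_le_inner_caputoDeriv [CompleteSpace H] {α τ : ℝ} {f f' : ℝ → H}
    (hα₀ : 0 ≤ α) (hα₁ : α < 1) (hτ : 0 ≤ τ) (hf : ContinuousOn f (Icc 0 τ)) (hf₀ : f 0 = 0)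
    (hf' : ∀ s ∈ Ioo 0 τ, HasDerivAt f (f' s) s)
    (hint : IntegrableOn (fun s => (τ - s) ^ (-α) * ‖f' s‖) (Ioo 0 τ))
    (hmax : IsMaxOn (fun s => ‖f s‖) (Icc 0 τ) τ) :
    τ ^ (-α) / Gamma (1 - α) * ‖f τ‖ ^ 2 ≤ ⟪caputoDeriv α f' τ, f τ⟫ := by
  have hdiff := differentiableOn_sub_rpow (-α) τ
  have hint' : IntegrableOn (fun s => (τ - s) ^ (-α) • f' s) (Ioo 0 τ) :=
    integrableOn_smul_of_integrableOn_mul_norm measurableSet_Ioo (by fun_prop)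
      (fun s hs => rpow_nonneg (sub_pos.2 hs.2).le _) hf' hint
  have hkernel : τ ^ (-α) * ‖f τ‖ ^ 2 ≤ ⟪f τ, ∫ s in Ioo 0 τ, (τ - s) ^ (-α) • f' s⟫ := by
    simpa only [sub_zero, hf₀, real_inner_self_eq_norm_sq] using
      mul_inner_sub_le_inner_integral_smul_of_isMaxOn hτ
        ((monotoneOn_sub_rpow_neg hα₀ τ).mono Ico_subset_Iio_self)
        (rpow_nonneg (sub_nonneg.2 hτ) _) (hdiff.continuousOn.mono Ico_subset_Iio_self)
        (hdiff.mono Ioo_subset_Iio_self) hf hf' (isMaxOn_inner_right_of_isMaxOn_norm hmax) hint'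
  rw [caputoDeriv, real_inner_smul_left, real_inner_comm, div_mul_eq_mul_div, one_div_mul_eq_div]
  exact div_le_div_of_nonneg_right hkernel (Gamma_pos_of_pos (sub_pos.2 hα₁)).le

theorem norm_le_div_residualBarrier_of_isMaxOn [CompleteSpace H] {α lam τ ρ : ℝ} {f f' : ℝ → H}
    (hα₀ : 0 ≤ α) (hα₁ : α < 1) (hτ : 0 ≤ τ) (hbarrier : 0 < residualBarrier α lam τ)
    (hf : ContinuousOn f (Icc 0 τ)) (hf₀ : f 0 = 0)
    (hf' : ∀ s ∈ Ioo 0 τ, HasDerivAt f (f' s) s)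
    (hint : IntegrableOn (fun s => (τ - s) ^ (-α) * ‖f' s‖) (Ioo 0 τ))
    (hmax : IsMaxOn (fun s => ‖f s‖) (Icc 0 τ) τ) (hρ : 0 ≤ ρ)
    (hres : ⟪caputoDeriv α f' τ, f τ⟫ + lam * ‖f τ‖ ^ 2 ≤ ρ * ‖f τ‖) :
    ‖f τ‖ ≤ ρ / residualBarrier α lam τ := by
  rcases (norm_nonneg (f τ)).eq_or_lt with hzero | hpos
  · rw [← hzero]
    exact div_nonneg hρ hbarrier.le
  rw [le_div_iff₀' hbarrier]
  refine le_of_mul_le_mul_right ?_ hpos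
  calc residualBarrier α lam τ * ‖f τ‖ * ‖f τ‖
      = τ ^ (-α) / Gamma (1 - α) * ‖f τ‖ ^ 2 + lam * ‖f τ‖ ^ 2 := by rw [residualBarrier]; ring
    _ ≤ ⟪caputoDeriv α f' τ, f τ⟫ + lam * ‖f τ‖ ^ 2 := by
        gcongr
        exact rpow_div_Gamma_mul_norm_sq_le_inner_caputoDeriv hα₀ hα₁ hτ hf hf₀ hf' hint hmax
    _ ≤ ρ * ‖f τ‖ := hres

theorem error_bound_R0_general [CompleteSpace H] {α lam T : ℝ} {e e' : ℝ → H} {r : ℝ → ℝ}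
    (hα₀ : 0 ≤ α) (hα₁ : α < 1) (hbarrier : ∀ s ∈ Ioc 0 T, 0 < residualBarrier α lam s)
    (he_cont : ContinuousOn e (Icc 0 T)) (he0 : e 0 = 0)
    (hderiv : ∀ s ∈ Ioo 0 T, HasDerivAt e (e' s) s)
    (hint : ∀ t ∈ Ioc 0 T, IntegrableOn (fun s => (t - s) ^ (-α) * ‖e' s‖) (Ioo 0 t))
    (hr_nonneg : ∀ t ∈ Ioc 0 T, 0 ≤ r t)
    (hres : ∀ t ∈ Ioc 0 T, ⟪caputoDeriv α e' t, e t⟫ + lam * ‖e t‖ ^ 2 ≤ r t * ‖e t‖)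
    {t : ℝ} (ht : t ∈ Ioc 0 T)
    (hbdd : BddAbove ((fun s => r s / residualBarrier α lam s) '' Ioc 0 t)) :
    ‖e t‖ ≤ sSup ((fun s => r s / residualBarrier α lam s) '' Ioc 0 t) := by
  obtain ⟨τ, hτ, hmax⟩ := exists_isMaxOn_Icc_mem_Ioc (f := fun s => ‖e s‖) ht.1
    (he_cont.mono (Icc_subset_Icc_right ht.2)).norm (by simp only [he0, norm_zero, norm_nonneg])
  have hτT : τ ∈ Ioc 0 T := Ioc_subset_Ioc_right ht.2 hτ
  calc ‖e t‖ ≤ ‖e τ‖ := hmax (right_mem_Icc.2 ht.1.le)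
    _ ≤ r τ / residualBarrier α lam τ :=
        norm_le_div_residualBarrier_of_isMaxOn hα₀ hα₁ hτ.1.le (hbarrier τ hτT)
          (he_cont.mono (Icc_subset_Icc_right hτT.2)) he0
          (fun s hs => hderiv s (Ioo_subset_Ioo_right hτT.2 hs)) (hint τ hτT)
          (hmax.on_subset (Icc_subset_Icc_right hτ.2)) (hr_nonneg τ hτT) (hres τ hτT)
    _ ≤ sSup ((fun s => r s / residualBarrier α lam s) '' Ioc 0 t) :=
        le_csSup hbdd (mem_image_of_mem _ hτ)

end

/-- First bound of Corollary 2.2: with the residual barrier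
`𝓡₀(s) = s^(-α)/Γ(1-α) + λ` (for `λ ≥ 0`), the error satisfies
`‖e(t)‖ ≤ sup_{0 < s ≤ t} r(s)/𝓡₀(s)`, provided the supremum is finite. -/
theorem error_bound_R0
    {H : Type*} [NormedAddCommGroup H] [InnerProductSpace ℝ H] [CompleteSpace H]
    (α lam T : ℝ) (hα : α ∈ Set.Ioo (0 : ℝ) 1) (hlam : 0 ≤ lam) (hT : 0 < T)
    (e e' : ℝ → H) (r : ℝ → ℝ)
    (he_cont : ContinuousOn e (Set.Icc 0 T))
    (he0 : e 0 = 0)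
    (hderiv : ∀ s ∈ Set.Ioo 0 T, HasDerivAt e (e' s) s)
    (hint : ∀ t ∈ Set.Ioc 0 T, IntegrableOn (fun s => (t - s) ^ (-α) * ‖e' s‖) (Set.Ioo 0 t))
    (hlip : ∀ ε ∈ Set.Ioo 0 T, ∃ K : NNReal, LipschitzOnWith K (fun s => ‖e s‖) (Set.Icc ε T))
    (hr_nonneg : ∀ t ∈ Set.Ioc 0 T, 0 ≤ r t)
    (hr_cont : ContinuousOn r (Set.Ioc 0 T))
    (hres : ∀ t ∈ Set.Ioc 0 T,
      (1 / Real.Gamma (1 - α)) * ⟪(∫ s in Set.Ioo 0 t, (t - s) ^ (-α) • e' s), e t⟫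
        + lam * ‖e t‖ ^ 2 ≤ r t * ‖e t‖) :
    ∀ t ∈ Set.Ioc 0 T,
      BddAbove ((fun s => r s / (s ^ (-α) / Real.Gamma (1 - α) + lam)) '' Set.Ioc 0 t) →
      ‖e t‖ ≤ sSup ((fun s => r s / (s ^ (-α) / Real.Gamma (1 - α) + lam)) '' Set.Ioc 0 t) :=
  fun _ => error_bound_R0_general hα.1.le hα.2 (fun _ hs => residualBarrier_pos hα.2 hlam hs.1)
    he_cont he0 hderiv hint hr_nonneg (by simpa only [caputoDeriv, real_inner_smul_left] using hres)
end

section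
/- Let H be a real Hilbert space, α ∈ (0,1), λ ∈ ℝ, T > 0, and d ∈ H. Let ē : [0,T] → H be continuous with ē(0) = d, differentiable on (0,T), such that s ↦ (t−s)^{−α}‖ē′(s)‖ is integrable on (0,t) for every t ∈ (0,T], and such that t ↦ ‖ē(t)‖ is Lipschitz continuous on [ε, T] for every ε ∈ (0,T). Define e(0) := 0 and e(t) := ē(t) for t ∈ (0,T]. Let r : (0,T] → ℝ be nonnegative and continuous, with s ↦ (t−s)^{α−1} E_{α,α}(−λ(t−s)^α) r(s) integrable on (0,t) for every t ∈ (0,T], and suppose that for every t ∈ (0,T]: (1/Γ(1−α)) ⟨ t^{−α} d + ∫_0^t (t−s)^{−α} ē′(s) ds, e(t) ⟩ + λ ‖e(t)‖² ≤ r(t) ‖e(t)‖. Then for every t ∈ (0,T]: ‖e(t)‖ ≤ ∫_0^t (t−s)^{α−1} E_{α,α}(−λ(t−s)^α) r(s) ds. -/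
open MeasureTheory Real
open scoped RealInnerProductSpace

/-- The generalized Mittag-Leffler function `E_{a,b}(z) = ∑_{k≥0} z^k / Γ(ak + b)`. -/
noncomputable def mittagLeffler (a b z : ℝ) : ℝ := ∑' k : ℕ, z ^ k / Real.Gamma (a * k + b)

/-!
Let `K(t) = t^(α-1) E_{α,α}(-λ t^α)` and `G(t) = t^(-α)/Γ(1-α) + λ`. For the function `v` reset to
`0` at time `0` the residual `D^α v + λ v` is `v(0) G + G * v'`, and the Beta integral gives
`K * G = 1`, so convolving the residual with `K` returns `v`. Since `K > 0`, a pointwise bound on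
the residual of a scalar function is inherited by the function itself.

Positivity of `K` comes from the Volterra equation `Γ(α) K = t^(α-1) - λ K * t^(α-1)`: if `K > 0`
before `t` and `K(t) ≤ 0`, evaluating the equation at `t` and at a maximum point `x` of `K` on a
short interval `[m, t]` gives a contradiction.

To pass from the vector error to a scalar function, replace `‖·‖` by the smooth
`N = √(‖·‖² + δ²)`. The function `s ↦ N(e t) N(e s) - ⟪e t, e s⟫ - δ²` is nonnegative and vanishes
at `s = t`, so its Caputo derivative at `t` is nonpositive. This bounds `D^α N(e) + λ N(e)` by
`r + δ (t^(-α)/Γ(1-α) + |λ|)`, and `δ → 0` gives the claim.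
-/

open Filter Set Topology

section MittagLeffler

variable {a b : ℝ}

lemma rpow_mul_Gamma_le_Gamma_add {x : ℝ} (hx : 1 < x) (ha : 0 < a) :
    (x - 1) ^ a * Gamma x ≤ Gamma (x + a) := by
  have hx1 : 0 < x - 1 := by linarith
  have hG : 0 < Gamma (x - 1) := Gamma_pos_of_pos hx1
  have hGx : 0 < Gamma x := Gamma_pos_of_pos (by linarith)
  have hGa : 0 < Gamma (x + a) := Gamma_pos_of_pos (by linarith)
  have hslope := convexOn_log_Gamma.slope_mono_adjacent (x := x - 1) (y := x) (z := x + a)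
    hx1 (by simp only [mem_Ioi]; linarith) (by linarith) (by linarith)
  have hrec : log (Gamma x) = log (x - 1) + log (Gamma (x - 1)) := by
    rw [← log_mul hx1.ne' hG.ne', ← Gamma_add_one hx1.ne', sub_add_cancel]
  simp only [Function.comp_apply, sub_sub_cancel, div_one, add_sub_cancel_left] at hslope
  rw [le_div_iff₀ ha, sub_eq_of_eq_add hrec] at hslope
  rw [← log_le_log_iff (by positivity) hGa, log_mul (by positivity) hGx.ne', log_rpow hx1]
  linarith

lemma tendsto_Gamma_div_Gamma_add_atTop (ha : 0 < a) :
    Tendsto (fun x => Gamma x / Gamma (x + a)) atTop (𝓝 0) := by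
  have hlim : Tendsto (fun x : ℝ => (x - 1) ^ (-a)) atTop (𝓝 0) :=
    (tendsto_rpow_neg_atTop ha).comp (tendsto_atTop_add_const_right _ (-1) tendsto_id)
  refine squeeze_zero' ?_ ?_ hlim <;> filter_upwards [eventually_gt_atTop 1] with x hx
  · have := Gamma_pos_of_pos (zero_lt_one.trans hx)
    have := Gamma_pos_of_pos (by linarith : 0 < x + a)
    positivity
  · have hx1 : 0 < x - 1 := by linarith
    rw [div_le_iff₀ (Gamma_pos_of_pos (by linarith)), rpow_neg hx1.le, inv_mul_eq_div,
      le_div_iff₀' (by positivity)]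
    exact rpow_mul_Gamma_le_Gamma_add hx ha

lemma Gamma_mul_natCast_add_pos (ha : 0 < a) (hb : 0 < b) (k : ℕ) : 0 < Gamma (a * k + b) :=
  Gamma_pos_of_pos (by positivity)

/-- The Mittag-Leffler function as a formal power series, which gives access to the analyticity
of sums of power series. -/
noncomputable def mittagLefflerSeries (a b : ℝ) : FormalMultilinearSeries ℝ ℝ ℝ :=
  FormalMultilinearSeries.ofScalars ℝ fun k : ℕ => (Gamma (a * k + b))⁻¹

lemma mittagLefflerSeries_radius (ha : 0 < a) (hb : 0 < b) :
    (mittagLefflerSeries a b).radius = ⊤ := by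
  have hpos := Gamma_mul_natCast_add_pos ha hb
  refine FormalMultilinearSeries.ofScalars_radius_eq_top_of_tendsto _ _
    (.of_forall fun k => (inv_pos.2 (hpos k)).ne') ?_
  have harg : Tendsto (fun k : ℕ => a * (k : ℝ) + b) atTop atTop :=
    tendsto_atTop_add_const_right _ _ (tendsto_natCast_atTop_atTop.const_mul_atTop ha)
  refine ((tendsto_Gamma_div_Gamma_add_atTop ha).comp harg).congr fun k => ?_
  have hsucc : a * ((k + 1 : ℕ) : ℝ) + b = a * k + b + a := by push_cast; ring
  rw [norm_of_nonneg (inv_pos.2 (hpos _)).le, norm_of_nonneg (inv_pos.2 (hpos _)).le, hsucc,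
    inv_div_inv, Function.comp_apply]

lemma mittagLefflerSeries_apply (a b z : ℝ) (k : ℕ) :
    (mittagLefflerSeries a b k fun _ => z) = z ^ k / Gamma (a * k + b) := by
  rw [mittagLefflerSeries, FormalMultilinearSeries.ofScalars_apply_eq, smul_eq_mul,
    inv_mul_eq_div]

lemma summable_mittagLeffler (ha : 0 < a) (hb : 0 < b) (z : ℝ) :
    Summable fun k : ℕ => z ^ k / Gamma (a * k + b) := by
  have h := (mittagLefflerSeries a b).summable (x := z) (by
    rw [mittagLefflerSeries_radius ha hb]; simp)
  simpa only [mittagLefflerSeries_apply] using h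

lemma continuous_mittagLeffler (ha : 0 < a) (hb : 0 < b) : Continuous (mittagLeffler a b) := by
  have hsum : mittagLeffler a b = (mittagLefflerSeries a b).sum := by
    funext z
    simp only [mittagLeffler, FormalMultilinearSeries.sum, mittagLefflerSeries_apply]
  have h := (mittagLefflerSeries a b).continuousOn
  rwa [mittagLefflerSeries_radius ha hb, Metric.eball_top, continuousOn_univ, ← hsum] at h

lemma mittagLeffler_zero (ha : 0 < a) (hb : 0 < b) : mittagLeffler a b 0 = (Gamma b)⁻¹ := by
  rw [mittagLeffler, (summable_mittagLeffler ha hb 0).tsum_eq_zero_add]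
  simp

lemma mittagLeffler_eq_inv_Gamma_add (ha : 0 < a) (hb : 0 < b) (z : ℝ) :
    mittagLeffler a b z = (Gamma b)⁻¹ + z * mittagLeffler a (b + a) z := by
  unfold mittagLeffler
  rw [(summable_mittagLeffler ha hb z).tsum_eq_zero_add, ← tsum_mul_left]
  simp only [pow_zero, Nat.cast_zero, mul_zero, zero_add, one_div]
  congr 2 with k
  rw [pow_succ', Nat.cast_succ, mul_div_assoc, mul_add_one, add_assoc, add_comm a b]

end MittagLeffler

section Beta

variable {a b t : ℝ}

lemma integral_sub_rpow_mul_rpow (ha : 0 < a) (hb : 0 < b) (ht : 0 < t) :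
    ∫ s in (0 : ℝ)..t, (t - s) ^ (a - 1) * s ^ (b - 1)
      = Gamma a * Gamma b / Gamma (a + b) * t ^ (a + b - 1) := by
  have hbeta := Complex.betaIntegral_scaled (b : ℂ) (a : ℂ) ht
  rw [Complex.betaIntegral_eq_Gamma_mul_div _ _ (by simpa) (by simpa)] at hbeta
  have hcast : ∫ s in (0 : ℝ)..t, (s : ℂ) ^ ((b : ℂ) - 1) * ((t : ℂ) - s) ^ ((a : ℂ) - 1)
      = ∫ s in (0 : ℝ)..t, (((t - s) ^ (a - 1) * s ^ (b - 1) : ℝ) : ℂ) := by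
    refine intervalIntegral.integral_congr_Ioo_of_le ht.le fun s hs => ?_
    push_cast [Complex.ofReal_cpow (sub_nonneg.2 hs.2.le), Complex.ofReal_cpow hs.1.le]
    ring
  rw [hcast, intervalIntegral.integral_ofReal] at hbeta
  apply Complex.ofReal_injective
  rw [hbeta, Complex.ofReal_mul, Complex.ofReal_cpow ht.le]
  push_cast [← Complex.Gamma_ofReal]
  rw [add_comm (b : ℂ) a]
  ring

lemma intervalIntegrable_sub_rpow_mul_rpow (ha : 0 < a) (hb : 0 < b) (ht : 0 < t) :
    IntervalIntegrable (fun s => (t - s) ^ (a - 1) * s ^ (b - 1)) volume 0 t := by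
  refine intervalIntegral.intervalIntegrable_of_integral_ne_zero ?_
  rw [integral_sub_rpow_mul_rpow ha hb ht]
  have := Gamma_pos_of_pos ha
  have := Gamma_pos_of_pos hb
  have := Gamma_pos_of_pos (add_pos ha hb)
  positivity

end Beta

/-- The kernel `t^(b-1) E_{a,b}(c t^a)`. For `b = a` and `c = -λ` it is the resolvent kernel of
`D_t^a + λ`; the second parameter is free because convolution with powers shifts it. -/
noncomputable def mittagLefflerKernel (a b c t : ℝ) : ℝ :=
  t ^ (b - 1) * mittagLeffler a b (c * t ^ a)

section Kernel

variable {a b d t : ℝ}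

lemma hasSum_mittagLefflerKernel (ha : 0 < a) (hb : 0 < b) (c : ℝ) (ht : 0 < t) :
    HasSum (fun k : ℕ => c ^ k / Gamma (a * k + b) * t ^ (a * k + b - 1))
      (mittagLefflerKernel a b c t) := by
  refine ((summable_mittagLeffler ha hb (c * t ^ a)).hasSum.mul_left (t ^ (b - 1))).congr_fun
    fun k => ?_
  rw [add_sub_assoc, rpow_add ht, rpow_mul ht.le, rpow_natCast, mul_pow]
  ring

lemma continuous_mittagLeffler_const_mul_rpow (ha : 0 < a) (hb : 0 < b) (c : ℝ) :
    Continuous fun x : ℝ => mittagLeffler a b (c * x ^ a) :=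
  (continuous_mittagLeffler ha hb).comp ((continuous_rpow_const ha.le).const_mul c)

lemma measurable_mittagLefflerKernel (ha : 0 < a) (hb : 0 < b) (c : ℝ) :
    Measurable (mittagLefflerKernel a b c) :=
  (measurable_id.pow_const _).mul (continuous_mittagLeffler_const_mul_rpow ha hb c).measurable

lemma continuousOn_mittagLefflerKernel (ha : 0 < a) (hb : 0 < b) (c : ℝ) :
    ContinuousOn (mittagLefflerKernel a b c) (Ioi 0) :=
  (continuousOn_id.rpow_const fun _ hx => .inl (ne_of_gt hx)).mul
    (continuous_mittagLeffler_const_mul_rpow ha hb c).continuousOn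

lemma intervalIntegrable_mittagLefflerKernel (ha : 0 < a) (hb : 0 < b) (c x y : ℝ) :
    IntervalIntegrable (mittagLefflerKernel a b c) volume x y :=
  (intervalIntegral.intervalIntegrable_rpow' (by linarith)).mul_continuousOn
    (continuous_mittagLeffler_const_mul_rpow ha hb c).continuousOn

lemma intervalIntegrable_mittagLefflerKernel_sub (ha : 0 < a) (hb : 0 < b) (c x y t : ℝ) :
    IntervalIntegrable (fun s => mittagLefflerKernel a b c (t - s)) volume x y := by
  simpa using (intervalIntegrable_mittagLefflerKernel ha hb c (t - x) (t - y)).comp_sub_left t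

lemma mittagLefflerKernel_eq_add (ha : 0 < a) (hb : 0 < b) (c : ℝ) (ht : 0 < t) :
    mittagLefflerKernel a b c t
      = t ^ (b - 1) / Gamma b + c * mittagLefflerKernel a (b + a) c t := by
  rw [mittagLefflerKernel, mittagLefflerKernel, mittagLeffler_eq_inv_Gamma_add ha hb,
    add_sub_right_comm, rpow_add ht]
  ring

lemma intervalIntegrable_mittagLefflerKernel_sub_mul_rpow (ha : 0 < a) (hb : 0 < b) (hd : 0 < d)
    (c : ℝ) (ht : 0 < t) :
    IntervalIntegrable (fun s => mittagLefflerKernel a b c (t - s) * s ^ (d - 1)) volume 0 t := by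
  refine ((intervalIntegrable_sub_rpow_mul_rpow hb hd ht).mul_continuousOn
    ((continuous_mittagLeffler_const_mul_rpow ha hb c).comp
      (continuous_sub_left t)).continuousOn).congr fun s _ => ?_
  simp only [mittagLefflerKernel, Function.comp_apply]
  ring

lemma integral_mittagLefflerKernel_sub_mul_rpow (ha : 0 < a) (hb : 0 < b) (hd : 0 < d)
    (c : ℝ) (ht : 0 < t) :
    ∫ s in (0 : ℝ)..t, mittagLefflerKernel a b c (t - s) * s ^ (d - 1)
      = Gamma d * mittagLefflerKernel a (b + d) c t := by
  let F (c : ℝ) (k : ℕ) (s : ℝ) : ℝ :=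
    c ^ k / Gamma (a * k + b) * ((t - s) ^ (a * k + b - 1) * s ^ (d - 1))
  have hpos (k : ℕ) : 0 < a * k + b := by positivity
  have hF_integrable (c : ℝ) (k : ℕ) : IntervalIntegrable (F c k) volume 0 t :=
    (intervalIntegrable_sub_rpow_mul_rpow (hpos k) hd ht).const_mul _
  have hF_integral (c : ℝ) (k : ℕ) : ∫ s in (0 : ℝ)..t, F c k s
      = Gamma d * (c ^ k / Gamma (a * k + (b + d)) * t ^ (a * k + (b + d) - 1)) := by
    have := (Gamma_pos_of_pos (hpos k)).ne'
    rw [intervalIntegral.integral_const_mul, integral_sub_rpow_mul_rpow (hpos k) hd ht, add_assoc]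
    field_simp
  have hF_norm (k : ℕ) : ∀ s ∈ Ioo 0 t, ‖F c k s‖ = F |c| k s := fun s hs => by
    have := sub_pos.2 hs.2
    have := hs.1
    have := Gamma_pos_of_pos (hpos k)
    simp only [F]
    rw [norm_mul, norm_div, norm_pow, norm_eq_abs c, norm_of_nonneg this.le,
      norm_of_nonneg (by positivity)]
  have hF_sum : ∀ s ∈ Ioo 0 t, ∑' k, F c k s = mittagLefflerKernel a b c (t - s) * s ^ (d - 1) :=
    fun s hs => by
      rw [← (hasSum_mittagLefflerKernel ha hb c (sub_pos.2 hs.2)).tsum_eq, ← tsum_mul_right]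
      simp only [F, mul_assoc]
  have hshift (c : ℝ) := (hasSum_mittagLefflerKernel ha (add_pos hb hd) c ht).mul_left (Gamma d)
  have hnorm_integral (k : ℕ) : ∫ s in Ioc 0 t, ‖F c k s‖
      = Gamma d * (|c| ^ k / Gamma (a * k + (b + d)) * t ^ (a * k + (b + d) - 1)) := by
    rw [← hF_integral, ← intervalIntegral.integral_of_le ht.le]
    exact intervalIntegral.integral_congr_Ioo_of_le ht.le (hF_norm k)
  have hinterchange := hasSum_integral_of_summable_integral_norm (fun k => (hF_integrable c k).1)
    (by simpa only [hnorm_integral] using (hshift |c|).summable)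
  simp only [← intervalIntegral.integral_of_le ht.le, hF_integral] at hinterchange
  rw [← intervalIntegral.integral_congr_Ioo_of_le ht.le hF_sum]
  exact hinterchange.unique (hshift c)

end Kernel

section Positivity

variable {a c t x : ℝ}

lemma Gamma_mul_mittagLefflerKernel (ha : 0 < a) (c : ℝ) (ht : 0 < t) :
    Gamma a * mittagLefflerKernel a a c t
      = t ^ (a - 1) + c * ∫ s in (0 : ℝ)..t, mittagLefflerKernel a a c s * (t - s) ^ (a - 1) := by
  have hΓ := (Gamma_pos_of_pos ha).ne'
  have hflip := intervalIntegral.integral_comp_sub_left (a := 0) (b := t)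
    (fun s => mittagLefflerKernel a a c s * (t - s) ^ (a - 1)) t
  simp only [sub_sub_cancel, sub_self, sub_zero] at hflip
  rw [← hflip, integral_mittagLefflerKernel_sub_mul_rpow ha ha ha c ht,
    mittagLefflerKernel_eq_add ha ha c ht]
  field_simp

lemma intervalIntegrable_mittagLefflerKernel_mul_sub_rpow (ha : 0 < a) (c : ℝ) (ht : 0 < t) :
    IntervalIntegrable (fun s => mittagLefflerKernel a a c s * (t - s) ^ (a - 1)) volume 0 t := by
  simpa using
    ((intervalIntegrable_mittagLefflerKernel_sub_mul_rpow ha ha ha c ht).comp_sub_left t).symm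

lemma sub_rpow_le_div_rpow_mul_sub_rpow (ha : a ≤ 1) {s : ℝ} (hs : 0 < s) (hsx : s < x)
    (hxt : x ≤ t) : (t - s) ^ (a - 1) ≤ (t / x) ^ (a - 1) * (x - s) ^ (a - 1) := by
  have hx := hs.trans hsx
  have ht := hx.trans_le hxt
  rw [← mul_rpow (by positivity) (sub_nonneg.2 hsx.le)]
  refine rpow_le_rpow_of_nonpos (mul_pos (by positivity) (sub_pos.2 hsx)) ?_ (by linarith)
  rw [div_mul_eq_mul_div, div_le_iff₀ hx]
  nlinarith

lemma integral_sub_rpow (ha : 0 < a) (x t : ℝ) :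
    ∫ s in x..t, (t - s) ^ (a - 1) = (t - x) ^ a / a := by
  rw [intervalIntegral.integral_comp_sub_left (fun s => s ^ (a - 1)) t, sub_self,
    integral_rpow (.inl (by linarith)), sub_add_cancel, zero_rpow ha.ne', sub_zero]

/- The equation at `t` minus `(t/x)^(a-1)` times the equation at `x`. -/
lemma mittagLefflerKernel_mul_le (ha : 0 < a) (ha1 : a ≤ 1) (hc : c ≤ 0) (hx : 0 < x) (hxt : x < t)
    (hnonneg : ∀ s ∈ Ioo 0 x, 0 ≤ mittagLefflerKernel a a c s)
    (hmax : ∀ s ∈ Ioo x t, mittagLefflerKernel a a c s ≤ mittagLefflerKernel a a c x) :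
    mittagLefflerKernel a a c x * ((t / x) ^ (a - 1) * Gamma a + c * ((t - x) ^ a / a))
      ≤ Gamma a * mittagLefflerKernel a a c t := by
  set K := mittagLefflerKernel a a c
  have ht := hx.trans hxt
  have hint := intervalIntegrable_mittagLefflerKernel_mul_sub_rpow ha c ht
  have hint_left : IntervalIntegrable (fun s => K s * (t - s) ^ (a - 1)) volume 0 x :=
    hint.mono_set (by rw [uIcc_of_le hx.le, uIcc_of_le ht.le]; exact Icc_subset_Icc_right hxt.le)
  have hint_right : IntervalIntegrable (fun s => K s * (t - s) ^ (a - 1)) volume x t :=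
    hint.mono_set (by rw [uIcc_of_le hxt.le, uIcc_of_le ht.le]; exact Icc_subset_Icc_left hx.le)
  have hleft : ∫ s in (0 : ℝ)..x, K s * (t - s) ^ (a - 1)
      ≤ (t / x) ^ (a - 1) * ∫ s in (0 : ℝ)..x, K s * (x - s) ^ (a - 1) := by
    rw [← intervalIntegral.integral_const_mul]
    refine intervalIntegral.integral_mono_on_of_le_Ioo hx.le hint_left
      ((intervalIntegrable_mittagLefflerKernel_mul_sub_rpow ha c hx).const_mul _) fun s hs => ?_
    rw [mul_left_comm]
    exact mul_le_mul_of_nonneg_left (sub_rpow_le_div_rpow_mul_sub_rpow ha1 hs.1 hs.2 hxt.le)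
      (hnonneg s hs)
  have hright : ∫ s in x..t, K s * (t - s) ^ (a - 1) ≤ K x * ((t - x) ^ a / a) := by
    rw [← integral_sub_rpow ha, ← intervalIntegral.integral_const_mul]
    refine intervalIntegral.integral_mono_on_of_le_Ioo hxt.le hint_right
      (.const_mul ?_ _) fun s hs => ?_
    · simpa using (intervalIntegral.intervalIntegrable_rpow' (a := t - x) (b := t - t)
        (by linarith : -1 < a - 1)).comp_sub_left t
    · exact mul_le_mul_of_nonneg_right (hmax s hs) (rpow_nonneg (sub_nonneg.2 hs.2.le) _)
  have hpow : (t / x) ^ (a - 1) * x ^ (a - 1) = t ^ (a - 1) := by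
    rw [← mul_rpow (by positivity) hx.le, div_mul_cancel₀ _ hx.ne']
  have hKx := Gamma_mul_mittagLefflerKernel ha c hx
  rw [Gamma_mul_mittagLefflerKernel ha c ht,
    ← intervalIntegral.integral_add_adjacent_intervals hint_left hint_right]
  have hleft := mul_le_mul_of_nonpos_left hleft hc
  have hright := mul_le_mul_of_nonpos_left hright hc
  linear_combination hleft + hright + (t / x) ^ (a - 1) * hKx + hpow

lemma eventually_pos_div_rpow_mul_add (ha : 0 < a) (c : ℝ) {γ : ℝ} (hγ : 0 < γ) (ht : 0 < t) :
    ∀ᶠ x in 𝓝[<] t, 0 < (t / x) ^ (a - 1) * γ + c * ((t - x) ^ a / a) := by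
  have hcont : ContinuousAt (fun x => (t / x) ^ (a - 1) * γ + c * ((t - x) ^ a / a)) t := by
    refine .add (.mul (.rpow_const (by fun_prop (disch := exact ht.ne')) (.inl ?_)) (by fun_prop))
      (.mul (by fun_prop) (.div_const (.rpow_const (by fun_prop) (.inr ha.le)) _))
    positivity
  refine (hcont.eventually_const_lt ?_).filter_mono nhdsWithin_le_nhds
  beta_reduce
  rwa [div_self ht.ne', one_rpow, one_mul, sub_self, zero_rpow ha.ne', zero_div, mul_zero,
    add_zero]

lemma mittagLefflerKernel_pos_of_forall_Ioo (ha : 0 < a) (ha1 : a ≤ 1) (ht : 0 < t)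
    (hpos : ∀ s ∈ Ioo 0 t, 0 < mittagLefflerKernel a a c s) :
    0 < mittagLefflerKernel a a c t := by
  set K := mittagLefflerKernel a a c with hK
  have hΓ := Gamma_pos_of_pos ha
  rcases le_total 0 c with hc | hc
  · refine pos_of_mul_pos_right ?_ hΓ.le
    rw [hK, Gamma_mul_mittagLefflerKernel ha c ht]
    refine add_pos_of_pos_of_nonneg (by positivity) (mul_nonneg hc (le_of_lt ?_))
    refine intervalIntegral.intervalIntegral_pos_of_pos_on
      (intervalIntegrable_mittagLefflerKernel_mul_sub_rpow ha c ht) (fun s hs => ?_) ht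
    exact mul_pos (hpos s hs) (rpow_pos_of_pos (sub_pos.2 hs.2) _)
  by_contra! hKt
  obtain ⟨m, hmt, hm⟩ := mem_nhdsLT_iff_exists_Ico_subset.1
    ((eventually_pos_div_rpow_mul_add ha c hΓ ht).and (Ioo_mem_nhdsLT ht))
  have hm_pos : 0 < m := (hm ⟨le_rfl, hmt⟩).2.1
  obtain ⟨x, hx, hx_max⟩ := isCompact_Icc.exists_isMaxOn (nonempty_Icc.2 (le_of_lt hmt))
    ((continuousOn_mittagLefflerKernel ha ha c).mono fun s hs => hm_pos.trans_le hs.1)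
  have hKx : 0 < K x := (hpos m ⟨hm_pos, hmt⟩).trans_le (hx_max (left_mem_Icc.2 (le_of_lt hmt)))
  have hxt : x < t := hx.2.lt_of_ne fun h => hKt.not_gt (h ▸ hKx)
  have hle := mittagLefflerKernel_mul_le ha ha1 hc (hm_pos.trans_le hx.1) hxt
    (fun s hs => (hpos s ⟨hs.1, hs.2.trans hxt⟩).le)
    fun s hs => hx_max ⟨hx.1.trans hs.1.le, hs.2.le⟩
  exact (mul_pos hKx (hm ⟨hx.1, hxt⟩).1).not_ge
    (hle.trans (mul_nonpos_of_nonneg_of_nonpos hΓ.le hKt))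

lemma mittagLefflerKernel_pos (ha : 0 < a) (ha1 : a ≤ 1) (c : ℝ) (ht : 0 < t) :
    0 < mittagLefflerKernel a a c t := by
  have hpos_iff {x : ℝ} (hx : 0 < x) :
      0 < mittagLefflerKernel a a c x ↔ 0 < mittagLeffler a a (c * x ^ a) :=
    mul_pos_iff_of_pos_left (rpow_pos_of_pos hx _)
  by_contra! hKt
  have hclosed : IsClosed {x : ℝ | mittagLeffler a a (c * x ^ a) ≤ 0} :=
    isClosed_le (continuous_mittagLeffler_const_mul_rpow ha ha c) continuous_const
  obtain ⟨τ, ⟨hτ, hτ_le⟩, hτ_min⟩ := (isCompact_Icc.inter_right hclosed).exists_isLeast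
    (⟨t, right_mem_Icc.2 ht.le, not_lt.1 (mt (hpos_iff ht).2 hKt.not_gt)⟩ :
      (Icc 0 t ∩ {x : ℝ | mittagLeffler a a (c * x ^ a) ≤ 0}).Nonempty)
  have hτ_pos : 0 < τ := hτ.1.lt_of_ne' fun h0 => by
    have hΓ := Gamma_pos_of_pos ha
    rw [mem_ofPred, h0, zero_rpow ha.ne', mul_zero, mittagLeffler_zero ha ha] at hτ_le
    exact (inv_pos.2 hΓ).not_ge hτ_le
  refine ((hpos_iff hτ_pos).1 ?_).not_ge hτ_le
  refine mittagLefflerKernel_pos_of_forall_Ioo ha ha1 hτ_pos fun s hs => (hpos_iff hs.1).2 ?_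
  by_contra! hs_le
  exact hs.2.not_ge (hτ_min ⟨⟨hs.1.le, hs.2.le.trans hτ.2⟩, hs_le⟩)

end Positivity

section ConvolutionAssoc

variable {E : Type*} [NormedAddCommGroup E] [NormedSpace ℝ E] {K G : ℝ → ℝ} {u : ℝ → E}
  {t A : ℝ}

/-- The integrand `K(t - s) G(s - σ) u(σ)` of the iterated convolution `K * (G * u)` at `t`,
extended by zero from the triangle `σ < s`. -/
noncomputable def convTriangle (K G : ℝ → ℝ) (u : ℝ → E) (t s σ : ℝ) : E :=
  {p : ℝ × ℝ | p.2 < p.1}.indicator (fun p => (K (t - p.1) * G (p.1 - p.2)) • u p.2) (s, σ)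

lemma convTriangle_eq_indicator_Iio (K G : ℝ → ℝ) (u : ℝ → E) (t s : ℝ) :
    convTriangle K G u t s = (Iio s).indicator fun σ => K (t - s) • G (s - σ) • u σ := by
  ext σ
  simp only [convTriangle, indicator_apply, mem_ofPred, mem_Iio, mul_smul]

lemma convTriangle_eq_indicator_Ioi (K G : ℝ → ℝ) (u : ℝ → E) (t σ : ℝ) :
    (fun s => convTriangle K G u t s σ)
      = (Ioi σ).indicator fun s => (K (t - s) * G (s - σ)) • u σ := by
  ext s
  simp only [convTriangle, indicator_apply, mem_ofPred, mem_Ioi]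

lemma integral_convTriangle_right {s : ℝ} (hs : s ∈ Ioo 0 t) :
    ∫ σ in Ioo 0 t, convTriangle K G u t s σ
      = K (t - s) • ∫ σ in (0 : ℝ)..s, G (s - σ) • u σ := by
  rw [convTriangle_eq_indicator_Iio, setIntegral_indicator measurableSet_Iio, Ioo_inter_Iio,
    min_eq_right hs.2.le, integral_smul, intervalIntegral.integral_of_le hs.1.le,
    integral_Ioc_eq_integral_Ioo]

lemma integral_convTriangle_left [CompleteSpace E] {σ : ℝ} (hσ : σ ∈ Ioo 0 t) :
    ∫ s in Ioo 0 t, convTriangle K G u t s σ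
      = (∫ y in (0 : ℝ)..(t - σ), K (t - σ - y) * G y) • u σ := by
  have hshift := intervalIntegral.integral_comp_sub_right (a := σ) (b := t)
    (fun y => K (t - σ - y) * G y) σ
  simp only [sub_self, sub_sub_sub_cancel_right] at hshift
  rw [convTriangle_eq_indicator_Ioi, setIntegral_indicator measurableSet_Ioi, Ioo_inter_Ioi,
    max_eq_right hσ.1.le, integral_smul_const, ← integral_Ioc_eq_integral_Ioo,
    ← intervalIntegral.integral_of_le hσ.2.le, hshift]

lemma norm_convTriangle (K G : ℝ → ℝ) (u : ℝ → E) (t s σ : ℝ) :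
    ‖convTriangle K G u t s σ‖
      = convTriangle (fun x => ‖K x‖) (fun x => ‖G x‖) (fun x => ‖u x‖) t s σ := by
  rw [convTriangle, norm_indicator_eq_indicator_norm, convTriangle]
  simp only [norm_smul, norm_mul, smul_eq_mul]

lemma integrable_convTriangle (hK : Measurable K) (hG : Measurable G)
    (hKG : ∀ x ∈ Ioo 0 t, IntervalIntegrable (fun y => K (x - y) * G y) volume 0 x)
    (hA : ∀ x ∈ Ioo 0 t, ∫ y in (0 : ℝ)..x, ‖K (x - y)‖ * ‖G y‖ ≤ A)
    (hu : IntegrableOn u (Ioo 0 t)) :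
    Integrable (fun p : ℝ × ℝ => convTriangle K G u t p.1 p.2)
      ((volume.restrict (Ioo 0 t)).prod (volume.restrict (Ioo 0 t))) := by
  have hmeas : AEStronglyMeasurable (fun p : ℝ × ℝ => convTriangle K G u t p.1 p.2)
      ((volume.restrict (Ioo 0 t)).prod (volume.restrict (Ioo 0 t))) :=
    AEStronglyMeasurable.indicator (.smul (by fun_prop) hu.aestronglyMeasurable.comp_snd)
      (measurableSet_lt measurable_snd measurable_fst)
  rw [integrable_prod_iff' hmeas]
  constructor
  · filter_upwards [ae_restrict_mem measurableSet_Ioo] with σ hσ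
    rw [convTriangle_eq_indicator_Ioi, integrable_indicator_iff measurableSet_Ioi, IntegrableOn,
      Measure.restrict_restrict measurableSet_Ioi, inter_comm, Ioo_inter_Ioi, max_eq_right hσ.1.le]
    have hshift := (hKG (t - σ) ⟨sub_pos.2 hσ.2, sub_lt_self t hσ.1⟩).comp_sub_right σ
    simp only [zero_add, sub_add_cancel, sub_sub_sub_cancel_right] at hshift
    exact ((intervalIntegrable_iff_integrableOn_Ioo_of_le hσ.2.le).1 hshift).smul_const _
  · refine (hu.norm.const_mul A).mono' hmeas.norm.prod_swap.integral_prod_right' ?_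
    filter_upwards [ae_restrict_mem measurableSet_Ioo] with σ hσ
    rw [norm_of_nonneg (integral_nonneg fun _ => norm_nonneg _)]
    simp only [norm_convTriangle]
    rw [integral_convTriangle_left hσ, smul_eq_mul]
    exact mul_le_mul_of_nonneg_right (hA _ ⟨sub_pos.2 hσ.2, sub_lt_self t hσ.1⟩) (norm_nonneg _)

lemma intervalIntegrable_iteratedConv (ht : 0 ≤ t)
    (hint : Integrable (fun p : ℝ × ℝ => convTriangle K G u t p.1 p.2)
      ((volume.restrict (Ioo 0 t)).prod (volume.restrict (Ioo 0 t)))) :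
    IntervalIntegrable (fun s => K (t - s) • ∫ σ in (0 : ℝ)..s, G (s - σ) • u σ) volume 0 t :=
  (intervalIntegrable_iff_integrableOn_Ioo_of_le ht).2 <| hint.integral_prod_left.congr <|
    (ae_restrict_iff' measurableSet_Ioo).2 <| .of_forall fun _ => integral_convTriangle_right

lemma integral_iteratedConv [CompleteSpace E] (ht : 0 ≤ t)
    (hint : Integrable (fun p : ℝ × ℝ => convTriangle K G u t p.1 p.2)
      ((volume.restrict (Ioo 0 t)).prod (volume.restrict (Ioo 0 t)))) :
    ∫ s in (0 : ℝ)..t, K (t - s) • ∫ σ in (0 : ℝ)..s, G (s - σ) • u σ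
      = ∫ σ in (0 : ℝ)..t, (∫ y in (0 : ℝ)..(t - σ), K (t - σ - y) * G y) • u σ := by
  simp only [intervalIntegral.integral_of_le ht, integral_Ioc_eq_integral_Ioo]
  rw [← setIntegral_congr_fun measurableSet_Ioo fun _ => integral_convTriangle_right,
    ← setIntegral_congr_fun measurableSet_Ioo fun _ => integral_convTriangle_left]
  exact integral_integral_swap hint

end ConvolutionAssoc

/-- The kernel whose convolution with `v'` is `D_t^a v + λ v` when `v 0 = 0`. It is conjugate to
`mittagLefflerKernel a a (-λ)`: the convolution of the two is the constant `1`. -/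
noncomputable def caputoKernel (a lam s : ℝ) : ℝ :=
  s ^ (-a) / Gamma (1 - a) + lam

section CaputoKernel

variable {a t : ℝ}

lemma measurable_caputoKernel (a lam : ℝ) : Measurable (caputoKernel a lam) :=
  ((measurable_id.pow_const _).div_const _).add_const lam

lemma mittagLefflerKernel_sub_mul_caputoKernel (a b c lam t s : ℝ) :
    mittagLefflerKernel a b c (t - s) * caputoKernel a lam s
      = (Gamma (1 - a))⁻¹ * (mittagLefflerKernel a b c (t - s) * s ^ (1 - a - 1))
        + lam * mittagLefflerKernel a b c (t - s) := by
  rw [caputoKernel, sub_sub_cancel_left]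
  ring

lemma intervalIntegrable_mittagLefflerKernel_sub_mul_caputoKernel (ha : 0 < a) (ha1 : a < 1)
    (c lam : ℝ) (ht : 0 < t) :
    IntervalIntegrable (fun s => mittagLefflerKernel a a c (t - s) * caputoKernel a lam s)
      volume 0 t := by
  simp only [mittagLefflerKernel_sub_mul_caputoKernel]
  exact ((intervalIntegrable_mittagLefflerKernel_sub_mul_rpow ha ha (sub_pos.2 ha1) c ht).const_mul
    _).add ((intervalIntegrable_mittagLefflerKernel_sub ha ha c 0 t t).const_mul _)

lemma integral_mittagLefflerKernel_sub (ha : 0 < a) (c : ℝ) (ht : 0 < t) :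
    ∫ s in (0 : ℝ)..t, mittagLefflerKernel a a c (t - s) = mittagLefflerKernel a (a + 1) c t := by
  simpa using integral_mittagLefflerKernel_sub_mul_rpow ha ha one_pos c ht

lemma integral_mittagLefflerKernel_sub_mul_caputoKernel (ha : 0 < a) (ha1 : a < 1) (lam μ : ℝ)
    (ht : 0 < t) :
    ∫ s in (0 : ℝ)..t, mittagLefflerKernel a a (-lam) (t - s) * caputoKernel a μ s
      = 1 + (μ - lam) * mittagLefflerKernel a (a + 1) (-lam) t := by
  have hΓ := (Gamma_pos_of_pos (sub_pos.2 ha1)).ne'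
  have hsub := intervalIntegrable_mittagLefflerKernel_sub ha ha (-lam) 0 t t
  simp only [mittagLefflerKernel_sub_mul_caputoKernel]
  rw [intervalIntegral.integral_add
      ((intervalIntegrable_mittagLefflerKernel_sub_mul_rpow ha ha (sub_pos.2 ha1) _ ht).const_mul _)
      (hsub.const_mul _),
    intervalIntegral.integral_const_mul, intervalIntegral.integral_const_mul,
    integral_mittagLefflerKernel_sub_mul_rpow ha ha (sub_pos.2 ha1) _ ht,
    integral_mittagLefflerKernel_sub ha _ ht, add_sub_cancel, inv_mul_cancel_left₀ hΓ,
    mittagLefflerKernel_eq_add ha one_pos _ ht, sub_self, rpow_zero, Gamma_one, add_comm 1 a]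
  ring

lemma norm_caputoKernel_le (ha1 : a < 1) (lam : ℝ) {s : ℝ} (hs : 0 < s) :
    ‖caputoKernel a lam s‖ ≤ caputoKernel a |lam| s := by
  have := Gamma_pos_of_pos (sub_pos.2 ha1)
  exact (norm_add_le _ _).trans_eq (by rw [norm_of_nonneg (by positivity)]; rfl)

lemma exists_forall_integral_norm_mul_caputoKernel_le (ha : 0 < a) (ha1 : a < 1) (lam t : ℝ) :
    ∃ A, ∀ x ∈ Ioo 0 t, ∫ y in (0 : ℝ)..x,
      ‖mittagLefflerKernel a a (-lam) (x - y)‖ * ‖caputoKernel a lam y‖ ≤ A := by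
  have hcont : ContinuousOn (fun x => 1 + (|lam| - lam) * mittagLefflerKernel a (a + 1) (-lam) x)
      (Icc 0 t) := by
    refine (continuous_const.add (continuous_const.mul (.mul ?_
      (continuous_mittagLeffler_const_mul_rpow ha (by linarith) _)))).continuousOn
    exact continuous_rpow_const (by linarith)
  obtain ⟨A, hA⟩ := isCompact_Icc.bddAbove_image hcont
  refine ⟨A, fun x hx => le_trans ?_ (hA (mem_image_of_mem _ (Ioo_subset_Icc_self hx)))⟩
  have hint (μ : ℝ) :=
    intervalIntegrable_mittagLefflerKernel_sub_mul_caputoKernel ha ha1 (-lam) μ hx.1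
  rw [← integral_mittagLefflerKernel_sub_mul_caputoKernel ha ha1 lam |lam| hx.1]
  simp only [← norm_mul]
  refine intervalIntegral.integral_mono_on_of_le_Ioo hx.1.le (hint lam).norm
    (hint |lam|) fun s hs => ?_
  have hK := (mittagLefflerKernel_pos ha ha1.le (-lam) (sub_pos.2 hs.2)).le
  rw [norm_mul, norm_of_nonneg hK]
  exact mul_le_mul_of_nonneg_left (norm_caputoKernel_le ha1 lam hs.1) hK

end CaputoKernel

section CaputoDerivative

variable {E : Type*} [NormedAddCommGroup E] [NormedSpace ℝ E]

/-- The Caputo derivative of order `a` at `t` of the function equal to `v` on `(0, ∞)` and reset to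
`0` at time `0`, where `v'` is the derivative of `v`: the jump `v 0` contributes the term
`t^(-a)/Γ(1-a) v 0`. -/
noncomputable def resetCaputoDeriv (a : ℝ) (v v' : ℝ → E) (t : ℝ) : E :=
  (Gamma (1 - a))⁻¹ • (t ^ (-a) • v 0 + ∫ s in (0 : ℝ)..t, (t - s) ^ (-a) • v' s)

/-- `v` is continuous on `[0, T]` and differentiable on `(0, T)` with derivative `v'`, and the
integrals defining its Caputo derivatives of order `a` on `(0, T]` converge absolutely. -/
structure IsCaputoRegular (a T : ℝ) (v v' : ℝ → E) : Prop where
  continuousOn : ContinuousOn v (Icc 0 T)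
  hasDerivAt : ∀ s ∈ Ioo 0 T, HasDerivAt v (v' s) s
  intervalIntegrable_smul : ∀ t ∈ Ioc 0 T,
    IntervalIntegrable (fun s => (t - s) ^ (-a) • v' s) volume 0 t

namespace IsCaputoRegular

variable {a t T : ℝ} {v v' : ℝ → E}

lemma mono (h : IsCaputoRegular a T v v') (ht : t ≤ T) : IsCaputoRegular a t v v' where
  continuousOn := h.continuousOn.mono (Icc_subset_Icc_right ht)
  hasDerivAt s hs := h.hasDerivAt s ⟨hs.1, hs.2.trans_le ht⟩
  intervalIntegrable_smul s hs := h.intervalIntegrable_smul s ⟨hs.1, hs.2.trans ht⟩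

lemma of_norm_le [CompleteSpace E] {g : ℝ → ℝ} (hcont : ContinuousOn v (Icc 0 T))
    (hderiv : ∀ s ∈ Ioo 0 T, HasDerivAt v (v' s) s) (hle : ∀ s ∈ Ioo 0 T, ‖v' s‖ ≤ g s)
    (hint : ∀ t ∈ Ioc 0 T, IntervalIntegrable (fun s => (t - s) ^ (-a) * g s) volume 0 t) :
    IsCaputoRegular a T v v' where
  continuousOn := hcont
  hasDerivAt := hderiv
  intervalIntegrable_smul t ht := by
    have hsub : Ioo 0 t ⊆ Ioo 0 T := Ioo_subset_Ioo_right ht.2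
    have hmeas : AEStronglyMeasurable v' (volume.restrict (Ioo 0 t)) :=
      (aestronglyMeasurable_deriv v _).congr <| (ae_restrict_iff' measurableSet_Ioo).2 <|
        .of_forall fun s hs => (hderiv s (hsub hs)).deriv
    have hpow : AEStronglyMeasurable (fun s => (t - s) ^ (-a)) (volume.restrict (Ioo 0 t)) :=
      ((measurable_const.sub measurable_id).pow_const _).aestronglyMeasurable
    rw [intervalIntegrable_iff_integrableOn_Ioo_of_le ht.1.le]
    refine ((intervalIntegrable_iff_integrableOn_Ioo_of_le ht.1.le).1 (hint t ht)).mono'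
      (hpow.smul hmeas) <| (ae_restrict_iff' measurableSet_Ioo).2 <| .of_forall fun s hs => ?_
    have hpow_nonneg : 0 ≤ (t - s) ^ (-a) := rpow_nonneg (sub_nonneg.2 hs.2.le) _
    rw [norm_smul, norm_of_nonneg hpow_nonneg]
    exact mul_le_mul_of_nonneg_left (hle s (hsub hs)) hpow_nonneg

lemma intervalIntegrable_deriv (h : IsCaputoRegular a t v v') (ha : 0 ≤ a) (ht : 0 < t) :
    IntervalIntegrable v' volume 0 t := by
  have hcont : Continuous fun s => (t - s) ^ a :=
    (continuous_rpow_const ha).comp (continuous_sub_left t)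
  refine ((h.intervalIntegrable_smul t ⟨ht, le_rfl⟩).continuousOn_smul
    hcont.continuousOn).congr_uIoo fun s hs => ?_
  rw [uIoo_of_le ht.le] at hs
  simp only
  rw [smul_smul, ← rpow_add (sub_pos.2 hs.2), add_neg_cancel, rpow_zero, one_smul]

lemma integral_eq_sub [CompleteSpace E] (h : IsCaputoRegular a t v v') (ha : 0 ≤ a) (ht : 0 < t) :
    ∫ s in (0 : ℝ)..t, v' s = v t - v 0 :=
  intervalIntegral.integral_eq_sub_of_hasDerivAt_of_le ht.le h.continuousOn h.hasDerivAt
    (h.intervalIntegrable_deriv ha ht)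

lemma resetCaputoDeriv_add_smul [CompleteSpace E] (h : IsCaputoRegular a t v v') (ha : 0 ≤ a)
    (ht : 0 < t) (lam : ℝ) :
    resetCaputoDeriv a v v' t + lam • v t
      = caputoKernel a lam t • v 0 + ∫ s in (0 : ℝ)..t, caputoKernel a lam (t - s) • v' s := by
  have hsplit (s : ℝ) : caputoKernel a lam (t - s) • v' s
      = (Gamma (1 - a))⁻¹ • (t - s) ^ (-a) • v' s + lam • v' s := by
    rw [caputoKernel, add_smul, smul_smul, div_eq_inv_mul]
  have hpow : IntervalIntegrable (fun s => (Gamma (1 - a))⁻¹ • (t - s) ^ (-a) • v' s) volume 0 t :=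
    (h.intervalIntegrable_smul t ⟨ht, le_rfl⟩).smul _
  have hconst : IntervalIntegrable (fun s => lam • v' s) volume 0 t :=
    (h.intervalIntegrable_deriv ha ht).smul _
  simp only [hsplit]
  rw [intervalIntegral.integral_add hpow hconst, intervalIntegral.integral_smul,
    intervalIntegral.integral_smul, h.integral_eq_sub ha ht, resetCaputoDeriv, caputoKernel,
    smul_add, add_smul, smul_smul, div_eq_inv_mul, smul_sub]
  abel

lemma mittagLefflerKernel_smul_residual [CompleteSpace E] (h : IsCaputoRegular a t v v')
    (ha : 0 ≤ a) (lam : ℝ) {s : ℝ} (hs : s ∈ Ioo 0 t) :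
    mittagLefflerKernel a a (-lam) (t - s) • (resetCaputoDeriv a v v' s + lam • v s)
      = (mittagLefflerKernel a a (-lam) (t - s) * caputoKernel a lam s) • v 0
        + mittagLefflerKernel a a (-lam) (t - s)
          • ∫ σ in (0 : ℝ)..s, caputoKernel a lam (s - σ) • v' σ := by
  rw [(h.mono hs.2.le).resetCaputoDeriv_add_smul ha hs.1, smul_add, mul_smul]

lemma integrable_convTriangle_caputoKernel (h : IsCaputoRegular a t v v') (ha : 0 < a) (ha1 : a < 1)
    (ht : 0 < t) (lam : ℝ) :
    Integrable (fun p : ℝ × ℝ =>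
        convTriangle (mittagLefflerKernel a a (-lam)) (caputoKernel a lam) v' t p.1 p.2)
      ((volume.restrict (Ioo 0 t)).prod (volume.restrict (Ioo 0 t))) := by
  obtain ⟨A, hA⟩ := exists_forall_integral_norm_mul_caputoKernel_le ha ha1 lam t
  exact integrable_convTriangle (measurable_mittagLefflerKernel ha ha _)
    (measurable_caputoKernel a lam)
    (fun x hx =>
      intervalIntegrable_mittagLefflerKernel_sub_mul_caputoKernel ha ha1 _ lam hx.1)
    hA ((intervalIntegrable_iff_integrableOn_Ioo_of_le ht.le).1
      (h.intervalIntegrable_deriv ha.le ht))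

lemma intervalIntegrable_mittagLefflerKernel_smul_residual [CompleteSpace E]
    (h : IsCaputoRegular a t v v') (ha : 0 < a) (ha1 : a < 1) (ht : 0 < t) (lam : ℝ) :
    IntervalIntegrable (fun s => mittagLefflerKernel a a (-lam) (t - s)
      • (resetCaputoDeriv a v v' s + lam • v s)) volume 0 t := by
  have hinitial :=
    (intervalIntegrable_mittagLefflerKernel_sub_mul_caputoKernel ha ha1 (-lam) lam
      ht).smul_continuousOn (continuousOn_const (c := v 0))
  have hconv := intervalIntegrable_iteratedConv ht.le
    (h.integrable_convTriangle_caputoKernel ha ha1 ht lam)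
  refine (hinitial.add hconv).congr_uIoo fun s hs => ?_
  rw [uIoo_of_le ht.le] at hs
  exact (h.mittagLefflerKernel_smul_residual ha.le lam hs).symm

lemma integral_mittagLefflerKernel_smul_residual [CompleteSpace E]
    (h : IsCaputoRegular a t v v') (ha : 0 < a) (ha1 : a < 1) (ht : 0 < t) (lam : ℝ) :
    ∫ s in (0 : ℝ)..t, mittagLefflerKernel a a (-lam) (t - s)
      • (resetCaputoDeriv a v v' s + lam • v s) = v t := by
  have hconj {x : ℝ} (hx : 0 < x) :
      ∫ s in (0 : ℝ)..x, mittagLefflerKernel a a (-lam) (x - s) * caputoKernel a lam s = 1 := by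
    rw [integral_mittagLefflerKernel_sub_mul_caputoKernel ha ha1 lam lam hx, sub_self, zero_mul,
      add_zero]
  have hconv := h.integrable_convTriangle_caputoKernel ha ha1 ht lam
  rw [intervalIntegral.integral_congr_Ioo_of_le ht.le
      fun s hs => h.mittagLefflerKernel_smul_residual ha.le lam hs,
    intervalIntegral.integral_add
      ((intervalIntegrable_mittagLefflerKernel_sub_mul_caputoKernel ha ha1 _ lam
        ht).smul_continuousOn continuousOn_const)
      (intervalIntegrable_iteratedConv ht.le hconv),
    intervalIntegral.integral_smul_const, hconj ht, integral_iteratedConv ht.le hconv,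
    intervalIntegral.integral_congr_Ioo_of_le ht.le
      fun σ hσ => by rw [hconj (sub_pos.2 hσ.2), one_smul],
    h.integral_eq_sub ha.le ht, one_smul, add_sub_cancel]

lemma le_integral_of_residual_le {v v' : ℝ → ℝ} (h : IsCaputoRegular a t v v') (ha : 0 < a)
    (ha1 : a < 1) (ht : 0 < t) {lam : ℝ} {ρ : ℝ → ℝ}
    (hρ : IntervalIntegrable (fun s => mittagLefflerKernel a a (-lam) (t - s) * ρ s) volume 0 t)
    (hle : ∀ s ∈ Ioo 0 t, resetCaputoDeriv a v v' s + lam * v s ≤ ρ s) :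
    v t ≤ ∫ s in (0 : ℝ)..t, mittagLefflerKernel a a (-lam) (t - s) * ρ s := by
  rw [← h.integral_mittagLefflerKernel_smul_residual ha ha1 ht lam]
  exact intervalIntegral.integral_mono_on_of_le_Ioo ht.le
    (h.intervalIntegrable_mittagLefflerKernel_smul_residual ha ha1 ht lam) hρ fun s hs =>
      mul_le_mul_of_nonneg_left (hle s hs)
        (mittagLefflerKernel_pos ha ha1.le (-lam) (sub_pos.2 hs.2)).le

lemma sub_rpow_mul_norm_sub_le [CompleteSpace E] {v v' : ℝ → E} (h : IsCaputoRegular a t v v')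
    (ha : 0 ≤ a) {s : ℝ} (hs : 0 ≤ s) (hst : s < t) :
    (t - s) ^ (-a) * ‖v t - v s‖ ≤ ∫ σ in s..t, ‖(t - σ) ^ (-a) • v' σ‖ := by
  have ht := hs.trans_lt hst
  have hsub : uIcc s t ⊆ uIcc 0 t := by
    rw [uIcc_of_le hst.le, uIcc_of_le ht.le]
    exact Icc_subset_Icc_left hs
  have hint := (h.intervalIntegrable_deriv ha ht).mono_set hsub
  have hftc : ∫ σ in s..t, v' σ = v t - v s :=
    intervalIntegral.integral_eq_sub_of_hasDerivAt_of_le hst.le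
      (h.continuousOn.mono (Icc_subset_Icc_left hs))
      (fun σ hσ => h.hasDerivAt σ ⟨hs.trans_lt hσ.1, hσ.2⟩) hint
  rw [← hftc]
  calc (t - s) ^ (-a) * ‖∫ σ in s..t, v' σ‖
      ≤ (t - s) ^ (-a) * ∫ σ in s..t, ‖v' σ‖ := by
        gcongr
        exact intervalIntegral.norm_integral_le_integral_norm hst.le
    _ = ∫ σ in s..t, (t - s) ^ (-a) * ‖v' σ‖ := (intervalIntegral.integral_const_mul _ _).symm
    _ ≤ ∫ σ in s..t, ‖(t - σ) ^ (-a) • v' σ‖ := by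
        refine intervalIntegral.integral_mono_on_of_le_Ioo hst.le (hint.norm.const_mul _)
          ((h.intervalIntegrable_smul t ⟨ht, le_rfl⟩).mono_set hsub).norm fun σ hσ => ?_
        rw [norm_smul, norm_of_nonneg (rpow_nonneg (sub_nonneg.2 hσ.2.le) _)]
        gcongr ?_ * _
        exact rpow_le_rpow_of_nonpos (sub_pos.2 hσ.2) (by linarith [hσ.1]) (by linarith)

lemma continuousOn_sub_rpow_mul {v v' : ℝ → ℝ} (h : IsCaputoRegular a t v v') (ha : 0 ≤ a)
    (ht : 0 < t) (hvt : v t = 0) : ContinuousOn (fun s => (t - s) ^ (-a) * v s) (Icc 0 t) := by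
  intro s hs
  rcases hs.2.lt_or_eq with hst | rfl
  · exact (ContinuousAt.continuousWithinAt (by
      exact .rpow_const (by fun_prop) (.inl (sub_pos.2 hst).ne'))).mul (h.continuousOn s hs)
  have hint := (h.intervalIntegrable_smul s ⟨ht, le_rfl⟩).norm
  rw [intervalIntegrable_iff_integrableOn_Icc_of_le ht.le, ← uIcc_of_le ht.le] at hint
  have hlim := intervalIntegral.continuousOn_primitive_interval_left hint s right_mem_uIcc
  rw [uIcc_of_le ht.le, ContinuousWithinAt, intervalIntegral.integral_same] at hlim
  rw [ContinuousWithinAt, hvt, mul_zero]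
  refine squeeze_zero_norm' ?_ hlim
  filter_upwards [self_mem_nhdsWithin] with x hx
  rcases hx.2.lt_or_eq with hxs | rfl
  · have hle := h.sub_rpow_mul_norm_sub_le ha hx.1 hxs
    rwa [hvt, zero_sub, norm_neg, ← norm_of_nonneg (rpow_nonneg (sub_nonneg.2 hx.2) (-a)),
      ← norm_mul] at hle
  · simp [hvt]

/- The derivative of `(t - s)^(-a) v(s)` dominates `(t - s)^(-a) v'(s)`, and `v t = 0` kills the
boundary singularity. -/
lemma resetCaputoDeriv_nonpos {v v' : ℝ → ℝ} (h : IsCaputoRegular a t v v') (ha : 0 ≤ a)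
    (ha1 : a < 1) (ht : 0 < t) (hv : ∀ s ∈ Ioo 0 t, 0 ≤ v s) (hvt : v t = 0) :
    resetCaputoDeriv a v v' t ≤ 0 := by
  have hΓ := Gamma_pos_of_pos (sub_pos.2 ha1)
  have hderiv : ∀ s ∈ Ioo 0 t, HasDerivAt (fun s => (t - s) ^ (-a) * v s)
      (a * (t - s) ^ (-a - 1) * v s + (t - s) ^ (-a) * v' s) s := fun s hs => by
    have hpow := ((hasDerivAt_id s).const_sub t).rpow_const (p := -a)
      (.inl (sub_pos.2 hs.2).ne')
    refine (hpow.mul (h.hasDerivAt s hs)).congr_deriv ?_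
    simp only [id_eq]
    ring
  have hle : ∫ s in (0 : ℝ)..t, (t - s) ^ (-a) • v' s
      ≤ (t - t) ^ (-a) * v t - (t - 0) ^ (-a) * v 0 := by
    refine intervalIntegral.integral_le_sub_of_hasDeriv_right_of_le ht.le
      (h.continuousOn_sub_rpow_mul ha ht hvt) (fun s hs => (hderiv s hs).hasDerivWithinAt)
      ((intervalIntegrable_iff_integrableOn_Icc_of_le ht.le).1
        (h.intervalIntegrable_smul t ⟨ht, le_rfl⟩)) fun s hs => ?_
    have := sub_pos.2 hs.2
    have := hv s hs
    exact le_add_of_nonneg_left (by positivity)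
  rw [hvt, mul_zero, zero_sub, sub_zero] at hle
  exact smul_nonpos_of_nonneg_of_nonpos (inv_nonneg.2 hΓ.le) (by rw [smul_eq_mul]; linarith)

end IsCaputoRegular

end CaputoDerivative

section RegNorm

variable {E : Type*} [NormedAddCommGroup E] {δ : ℝ}

/-- A smooth regularization of the norm, which tends to `‖x‖` as `δ → 0`. -/
noncomputable def regNorm (δ : ℝ) (x : E) : ℝ := √(‖x‖ ^ 2 + δ ^ 2)

lemma regNorm_sq (δ : ℝ) (x : E) : regNorm δ x ^ 2 = ‖x‖ ^ 2 + δ ^ 2 :=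
  sq_sqrt (by positivity)

lemma regNorm_nonneg (δ : ℝ) (x : E) : 0 ≤ regNorm δ x := sqrt_nonneg _

lemma regNorm_pos (hδ : δ ≠ 0) (x : E) : 0 < regNorm δ x := sqrt_pos.2 (by positivity)

lemma norm_le_regNorm (δ : ℝ) (x : E) : ‖x‖ ≤ regNorm δ x :=
  le_sqrt_of_sq_le (le_add_of_nonneg_right (sq_nonneg δ))

lemma le_regNorm (δ : ℝ) (x : E) : δ ≤ regNorm δ x :=
  le_sqrt_of_sq_le (le_add_of_nonneg_left (sq_nonneg _))

lemma continuous_regNorm (δ : ℝ) : Continuous (regNorm δ : E → ℝ) := by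
  unfold regNorm
  fun_prop

variable {H : Type*} [NormedAddCommGroup H] [InnerProductSpace ℝ H]

lemma inner_add_sq_le_regNorm_mul (δ : ℝ) (x y : H) :
    ⟪x, y⟫ + δ ^ 2 ≤ regNorm δ x * regNorm δ y := by
  have hx := regNorm_sq δ x
  have hy := regNorm_sq δ y
  refine (add_le_add_left (real_inner_le_norm x y) _).trans
    (abs_le_of_sq_le_sq' ?_ (mul_nonneg (regNorm_nonneg δ x) (regNorm_nonneg δ y))).2
  rw [mul_pow, hx, hy]
  nlinarith [sq_nonneg (δ * (‖x‖ - ‖y‖))]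

lemma norm_inner_div_regNorm_le (δ : ℝ) (x y : H) : ‖⟪x, y⟫ / regNorm δ x‖ ≤ ‖y‖ := by
  rw [norm_div, norm_of_nonneg (regNorm_nonneg δ x)]
  refine div_le_of_le_mul₀ (regNorm_nonneg δ x) (norm_nonneg y) ((norm_inner_le_norm x y).trans ?_)
  rw [mul_comm]
  gcongr
  exact norm_le_regNorm δ x

lemma hasDerivAt_regNorm (hδ : δ ≠ 0) {e : ℝ → H} {e' : H} {s : ℝ} (he : HasDerivAt e e' s) :
    HasDerivAt (fun s => regNorm δ (e s)) (⟪e s, e'⟫ / regNorm δ (e s)) s := by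
  refine ((he.norm_sq.add_const (δ ^ 2)).sqrt (by positivity)).congr_deriv ?_
  rw [mul_div_mul_left _ _ two_ne_zero, regNorm]

end RegNorm

namespace IsCaputoRegular

variable {H : Type*} [NormedAddCommGroup H] [InnerProductSpace ℝ H] {a t T δ lam : ℝ}
  {e e' : ℝ → H} {f f' r : ℝ → ℝ}

lemma regNorm_comp (h : IsCaputoRegular a T e e') (hδ : δ ≠ 0) :
    IsCaputoRegular a T (fun s => regNorm δ (e s))
      (fun s => ⟪e s, e' s⟫ / regNorm δ (e s)) := by
  refine of_norm_le ((continuous_regNorm δ).comp_continuousOn h.continuousOn)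
    (fun s hs => hasDerivAt_regNorm hδ (h.hasDerivAt s hs))
    (fun s _ => norm_inner_div_regNorm_le δ (e s) (e' s))
    fun x hx => (h.intervalIntegrable_smul x hx).norm.congr_uIoo fun s hs => ?_
  rw [uIoo_of_le hx.1.le] at hs
  beta_reduce
  rw [norm_smul, norm_of_nonneg (rpow_nonneg (sub_nonneg.2 hs.2.le) _)]

lemma const_mul_sub_inner_sub_const (hf : IsCaputoRegular a T f f')
    (he : IsCaputoRegular a T e e') (m : ℝ) (b : H) (k : ℝ) :
    IsCaputoRegular a T (fun s => m * f s - ⟪b, e s⟫ - k) (fun s => m * f' s - ⟪b, e' s⟫) where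
  continuousOn := (((hf.continuousOn.const_mul m).sub
    (continuousOn_const.inner he.continuousOn)).sub continuousOn_const)
  hasDerivAt s hs := (((hf.hasDerivAt s hs).const_mul m).sub
    ((innerSL ℝ b).hasFDerivAt.comp_hasDerivAt s (he.hasDerivAt s hs))).sub_const k
  intervalIntegrable_smul x hx := by
    have hint := he.intervalIntegrable_smul x hx
    refine (((hf.intervalIntegrable_smul x hx).const_mul m).sub
      ⟨hint.1.const_inner b, hint.2.const_inner b⟩).congr fun s _ => ?_
    simp only [inner_smul_right, smul_eq_mul]
    ring

lemma resetCaputoDeriv_const_mul_sub_inner_sub_const [CompleteSpace H]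
    (hf : IsCaputoRegular a t f f') (he : IsCaputoRegular a t e e') (ht : 0 < t)
    (m : ℝ) (b : H) (k : ℝ) :
    resetCaputoDeriv a (fun s => m * f s - ⟪b, e s⟫ - k) (fun s => m * f' s - ⟪b, e' s⟫) t
      = m * resetCaputoDeriv a f f' t - ⟪b, resetCaputoDeriv a e e' t⟫
        - k * (t ^ (-a) / Gamma (1 - a)) := by
  have hint_f := (hf.intervalIntegrable_smul t ⟨ht, le_rfl⟩).const_mul m
  have hint_e := he.intervalIntegrable_smul t ⟨ht, le_rfl⟩
  have hsplit (s : ℝ) : (t - s) ^ (-a) • (m * f' s - ⟪b, e' s⟫)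
      = m * (t - s) ^ (-a) • f' s - ⟪b, (t - s) ^ (-a) • e' s⟫ := by
    simp only [inner_smul_right, smul_eq_mul]
    ring
  have hinner : ∫ s in (0 : ℝ)..t, ⟪b, (t - s) ^ (-a) • e' s⟫
      = ⟪b, ∫ s in (0 : ℝ)..t, (t - s) ^ (-a) • e' s⟫ :=
    (innerSL ℝ b).intervalIntegral_comp_comm hint_e
  simp only [resetCaputoDeriv, hsplit]
  rw [intervalIntegral.integral_sub hint_f ⟨hint_e.1.const_inner b, hint_e.2.const_inner b⟩,
    intervalIntegral.integral_const_mul, hinner]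
  simp only [inner_smul_right, inner_add_right, smul_eq_mul]
  ring

/- By Cauchy–Schwarz, `s ↦ N(e t) N(e s) - ⟪e t, e s⟫ - δ²` is nonnegative and vanishes at `t`, so
the extremum principle applies to it. -/
lemma regNorm_mul_resetCaputoDeriv_regNorm_le [CompleteSpace H] (h : IsCaputoRegular a t e e')
    (ha : 0 ≤ a) (ha1 : a < 1) (hδ : δ ≠ 0) (ht : 0 < t) :
    regNorm δ (e t) * resetCaputoDeriv a (fun s => regNorm δ (e s))
        (fun s => ⟪e s, e' s⟫ / regNorm δ (e s)) t
      ≤ ⟪e t, resetCaputoDeriv a e e' t⟫ + δ ^ 2 * (t ^ (-a) / Gamma (1 - a)) := by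
  have hnonpos := ((h.regNorm_comp hδ).const_mul_sub_inner_sub_const h
    (regNorm δ (e t)) (e t) (δ ^ 2)).resetCaputoDeriv_nonpos ha ha1 ht
    (fun s _ => by linarith [inner_add_sq_le_regNorm_mul δ (e t) (e s)])
    (by rw [← sq, regNorm_sq, real_inner_self_eq_norm_sq]; ring)
  rw [(h.regNorm_comp hδ).resetCaputoDeriv_const_mul_sub_inner_sub_const h ht] at hnonpos
  linarith

lemma resetCaputoDeriv_regNorm_add_le [CompleteSpace H] (h : IsCaputoRegular a t e e')
    (ha : 0 ≤ a) (ha1 : a < 1) (hδ : 0 < δ) (ht : 0 < t) {ρ : ℝ} (hρ : 0 ≤ ρ)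
    (hres : ⟪e t, resetCaputoDeriv a e e' t⟫ + lam * ‖e t‖ ^ 2 ≤ ρ * ‖e t‖) :
    resetCaputoDeriv a (fun s => regNorm δ (e s))
        (fun s => ⟪e s, e' s⟫ / regNorm δ (e s)) t + lam * regNorm δ (e t)
      ≤ ρ + δ * caputoKernel a |lam| t := by
  have hkernel : 0 ≤ caputoKernel a |lam| t :=
    (norm_nonneg _).trans (norm_caputoKernel_le ha1 lam ht)
  refine le_of_mul_le_mul_left ?_ (regNorm_pos hδ.ne' (e t))
  calc regNorm δ (e t) * (resetCaputoDeriv a (fun s => regNorm δ (e s))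
          (fun s => ⟪e s, e' s⟫ / regNorm δ (e s)) t + lam * regNorm δ (e t))
      ≤ ⟪e t, resetCaputoDeriv a e e' t⟫ + δ ^ 2 * (t ^ (-a) / Gamma (1 - a))
          + lam * (‖e t‖ ^ 2 + δ ^ 2) := by
        rw [← regNorm_sq]
        linarith [h.regNorm_mul_resetCaputoDeriv_regNorm_le ha ha1 hδ.ne' ht]
    _ ≤ ρ * ‖e t‖ + δ * δ * caputoKernel a |lam| t := by
        rw [caputoKernel]
        linarith [mul_le_mul_of_nonneg_left (le_abs_self lam) (sq_nonneg δ)]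
    _ ≤ ρ * regNorm δ (e t)
          + regNorm δ (e t) * δ * caputoKernel a |lam| t := by
        gcongr
        · exact norm_le_regNorm δ (e t)
        · exact le_regNorm δ (e t)
    _ = regNorm δ (e t) * (ρ + δ * caputoKernel a |lam| t) := by ring

lemma norm_le_integral_add [CompleteSpace H] (h : IsCaputoRegular a t e e') (ha : 0 < a)
    (ha1 : a < 1) (ht : 0 < t) (hr_nonneg : ∀ s ∈ Ioo 0 t, 0 ≤ r s)
    (hr_int : IntervalIntegrable (fun s => mittagLefflerKernel a a (-lam) (t - s) * r s) volume 0 t)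
    (hres : ∀ s ∈ Ioo 0 t,
      ⟪e s, resetCaputoDeriv a e e' s⟫ + lam * ‖e s‖ ^ 2 ≤ r s * ‖e s‖) (hδ : 0 < δ) :
    ‖e t‖ ≤ (∫ s in (0 : ℝ)..t, mittagLefflerKernel a a (-lam) (t - s) * r s)
      + δ * (1 + (|lam| - lam) * mittagLefflerKernel a (a + 1) (-lam) t) := by
  have hkernel_int := (intervalIntegrable_mittagLefflerKernel_sub_mul_caputoKernel ha ha1
    (-lam) |lam| ht).const_mul δ
  have hsplit (s : ℝ) :
      mittagLefflerKernel a a (-lam) (t - s) * (r s + δ * caputoKernel a |lam| s)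
        = mittagLefflerKernel a a (-lam) (t - s) * r s
          + δ * (mittagLefflerKernel a a (-lam) (t - s) * caputoKernel a |lam| s) := by ring
  rw [← integral_mittagLefflerKernel_sub_mul_caputoKernel ha ha1 lam |lam| ht,
    ← intervalIntegral.integral_const_mul, ← intervalIntegral.integral_add hr_int hkernel_int]
  simp only [← hsplit]
  refine (norm_le_regNorm δ (e t)).trans <|
    (h.regNorm_comp hδ.ne').le_integral_of_residual_le ha ha1 ht ?_ fun s hs =>
      (h.mono hs.2.le).resetCaputoDeriv_regNorm_add_le ha.le ha1 hδ hs.1 (hr_nonneg s hs)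
        (hres s hs)
  simpa only [hsplit] using hr_int.add hkernel_int

lemma norm_le_integral [CompleteSpace H] (h : IsCaputoRegular a t e e') (ha : 0 < a)
    (ha1 : a < 1) (ht : 0 < t) (hr_nonneg : ∀ s ∈ Ioo 0 t, 0 ≤ r s)
    (hr_int : IntervalIntegrable (fun s => mittagLefflerKernel a a (-lam) (t - s) * r s) volume 0 t)
    (hres : ∀ s ∈ Ioo 0 t,
      ⟪e s, resetCaputoDeriv a e e' s⟫ + lam * ‖e s‖ ^ 2 ≤ r s * ‖e s‖) :
    ‖e t‖ ≤ ∫ s in (0 : ℝ)..t, mittagLefflerKernel a a (-lam) (t - s) * r s := by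
  set I := ∫ s in (0 : ℝ)..t, mittagLefflerKernel a a (-lam) (t - s) * r s
  set C := 1 + (|lam| - lam) * mittagLefflerKernel a (a + 1) (-lam) t
  have hlim : Tendsto (fun δ : ℝ => I + δ * C) (𝓝[>] 0) (𝓝 (I + 0 * C)) :=
    (continuous_const.add (continuous_id.mul continuous_const)).continuousWithinAt
  rw [zero_mul, add_zero] at hlim
  refine ge_of_tendsto hlim ?_
  filter_upwards [self_mem_nhdsWithin] with δ hδ
  exact h.norm_le_integral_add ha ha1 ht hr_nonneg hr_int hres hδ

end IsCaputoRegular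

theorem apriori_error_bound_initial_mismatch_general
    {H : Type*} [NormedAddCommGroup H] [InnerProductSpace ℝ H] [CompleteSpace H]
    (α lam T : ℝ) (hα : α ∈ Set.Ioo (0 : ℝ) 1) (ebar ebar' : ℝ → H) (r : ℝ → ℝ)
    (hebar_cont : ContinuousOn ebar (Set.Icc 0 T))
    (hderiv : ∀ s ∈ Set.Ioo 0 T, HasDerivAt ebar (ebar' s) s)
    (hint : ∀ t ∈ Set.Ioc 0 T, IntegrableOn (fun s => (t - s) ^ (-α) * ‖ebar' s‖) (Set.Ioo 0 t))
    (hr_nonneg : ∀ t ∈ Set.Ioc 0 T, 0 ≤ r t)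
    (hr_int : ∀ t ∈ Set.Ioc 0 T,
      IntegrableOn (fun s => (t - s) ^ (α - 1) * mittagLeffler α α (-lam * (t - s) ^ α) * r s)
        (Set.Ioo 0 t))
    (hres : ∀ t ∈ Set.Ioc 0 T,
      (1 / Real.Gamma (1 - α)) *
          ⟪(t ^ (-α) • ebar 0 + ∫ s in Set.Ioo 0 t, (t - s) ^ (-α) • ebar' s), ebar t⟫
        + lam * ‖ebar t‖ ^ 2 ≤ r t * ‖ebar t‖) :
    ∀ t ∈ Set.Ioc 0 T,
      ‖ebar t‖ ≤ ∫ s in Set.Ioo 0 t,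
        (t - s) ^ (α - 1) * mittagLeffler α α (-lam * (t - s) ^ α) * r s := by
  intro t ht
  have hregular : IsCaputoRegular α T ebar ebar' :=
    .of_norm_le hebar_cont hderiv (fun _ _ => le_rfl) fun x hx =>
      (intervalIntegrable_iff_integrableOn_Ioo_of_le hx.1.le).2 (hint x hx)
  rw [← integral_Ioc_eq_integral_Ioo, ← intervalIntegral.integral_of_le ht.1.le]
  refine (hregular.mono ht.2).norm_le_integral hα.1 hα.2 ht.1
    (fun s hs => hr_nonneg s ⟨hs.1, hs.2.le.trans ht.2⟩)
    ((intervalIntegrable_iff_integrableOn_Ioo_of_le ht.1.le).2 (hr_int t ht)) fun s hs => ?_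
  rw [real_inner_comm, resetCaputoDeriv, real_inner_smul_left, inv_eq_one_div,
    intervalIntegral.integral_of_le hs.1.le, integral_Ioc_eq_integral_Ioo]
  exact hres s ⟨hs.1, hs.2.le.trans ht.2⟩

/-- Corollary 2.3 (the case `u_h(·,0) ≠ u₀`) in abstract form: the error `e` equals
a continuous function `ē` for `t > 0` but is reset to `0` at `t = 0`; the initial
mismatch `d = ē(0)` contributes the extra residual term `d · t^(-α)/Γ(1-α)`, and the
a posteriori bound `‖e(t)‖ ≤ (D_t^α + λ)⁻¹ r (t)` holds with the modified residual. -/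
theorem apriori_error_bound_initial_mismatch
    {H : Type*} [NormedAddCommGroup H] [InnerProductSpace ℝ H] [CompleteSpace H]
    (α lam T : ℝ) (hα : α ∈ Set.Ioo (0 : ℝ) 1) (hT : 0 < T) (d : H)
    (ebar ebar' : ℝ → H) (e : ℝ → H) (r : ℝ → ℝ)
    (hebar_cont : ContinuousOn ebar (Set.Icc 0 T))
    (hebar0 : ebar 0 = d)
    (hderiv : ∀ s ∈ Set.Ioo 0 T, HasDerivAt ebar (ebar' s) s)
    (hint : ∀ t ∈ Set.Ioc 0 T, IntegrableOn (fun s => (t - s) ^ (-α) * ‖ebar' s‖) (Set.Ioo 0 t))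
    (hlip : ∀ ε ∈ Set.Ioo 0 T, ∃ K : NNReal, LipschitzOnWith K (fun s => ‖ebar s‖) (Set.Icc ε T))
    (he0 : e 0 = 0)
    (he : ∀ t ∈ Set.Ioc 0 T, e t = ebar t)
    (hr_nonneg : ∀ t ∈ Set.Ioc 0 T, 0 ≤ r t)
    (hr_cont : ContinuousOn r (Set.Ioc 0 T))
    (hr_int : ∀ t ∈ Set.Ioc 0 T,
      IntegrableOn (fun s => (t - s) ^ (α - 1) * mittagLeffler α α (-lam * (t - s) ^ α) * r s)
        (Set.Ioo 0 t))
    (hres : ∀ t ∈ Set.Ioc 0 T,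
      (1 / Real.Gamma (1 - α)) *
          ⟪(t ^ (-α) • d + ∫ s in Set.Ioo 0 t, (t - s) ^ (-α) • ebar' s), e t⟫
        + lam * ‖e t‖ ^ 2 ≤ r t * ‖e t‖) :
    ∀ t ∈ Set.Ioc 0 T,
      ‖e t‖ ≤ ∫ s in Set.Ioo 0 t,
        (t - s) ^ (α - 1) * mittagLeffler α α (-lam * (t - s) ^ α) * r s := by
  intro t ht
  rw [he t ht]
  exact apriori_error_bound_initial_mismatch_general α lam T hα ebar ebar' r hebar_cont hderiv hint
    hr_nonneg hr_int (fun s hs => by simpa only [hebar0, he s hs] using hres s hs) t ht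
end
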